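/- The sequence {p(n)^{1/n}}_{n≥27} is log-convex; that is, for every integer n ≥ 27, (p(n)^{1/n})² ≤ p(n-1)^{1/(n-1)} · p(n+1)^{1/(n+1)}. -/

import Mathlib

open Real

/-- The partition function, as a real number. -/
noncomputable def p (n : ℕ) : ℝ := (Fintype.card (Nat.Partition n) : ℝ)

/-!
Taking logarithms, the claim at `n` becomes an inequality between `n²` times the second difference
of `log p`, `n` times its first difference and `log (p n)` itself. Since `log (p n)` grows like
`c √n`, the two sides grow like `5 / 4 c √n` and `2 c √n`, so explicit estimates of moderate
precision suffice once `n` is large.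

For `n > 4122`, Cauchy's formula on the circle of radius `exp (-x)` writes
`p N * exp (-N x) / ∏ (1 - exp (-k x))⁻¹` as an integral over the angle. When `x` is the saddle
point of index `n`, the three integrals for `N = n - 1, n, n + 1` differ only by a factor
`cos (δ θ + phase)` with `δ = -1, 0, 1`, and Gaussian moment bounds show that they are nearly equal.

For `n ≤ 4122` the partition numbers are computed by the kernel as the digits, in a huge base, of
one integer, a scaled value of the truncated generating function at the inverse of the base; the
computation is certified by Euler's pentagonal number theorem.
-/

namespace PartitionRoot

section GeneratingFunction

open PowerSeries Nat.Partition Filter Topology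
open scoped PowerSeries.WithPiTopology

/-- The number of partitions of `n` into parts of size at most `K`: the coefficient of `z ^ n` in
the `K`-th partial product of Euler's product. -/
def boundedCard (K n : ℕ) : ℕ := (restricted n (· ≤ K)).card

theorem boundedCard_le (K n : ℕ) : boundedCard K n ≤ Fintype.card (Nat.Partition n) :=
  Finset.card_le_univ _

theorem boundedCard_of_le {K n : ℕ} (h : n ≤ K) :
    boundedCard K n = Fintype.card (Nat.Partition n) := by
  rw [boundedCard, ← Finset.card_univ, restricted, Finset.filter_true_of_mem]
  exact fun q _ i hi => (le_of_mem_parts hi).trans h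

section Semiring

variable (R : Type*) [CommSemiring R] [TopologicalSpace R] [T2Space R]

theorem mk_boundedCard [IsTopologicalSemiring R] (K : ℕ) :
    (PowerSeries.mk fun n => (boundedCard K n : R)) =
      ∏ i ∈ Finset.range K, ∑' j : ℕ, (X : R⟦X⟧) ^ ((i + 1) * j) := by
  have h := hasProd_powerSeriesMk_card_restricted R (· ≤ K)
  have hfin := hasProd_prod_of_ne_finset_one (L := SummationFilter.unconditional ℕ)
    (f := fun i => if i + 1 ≤ K then ∑' j : ℕ, (X : R⟦X⟧) ^ ((i + 1) * j) else 1)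
    (s := Finset.range K) fun i hi => if_neg (by simpa using hi)
  exact (h.unique hfin).trans
    (Finset.prod_congr rfl fun i hi => if_pos (Finset.mem_range.mp hi))

theorem tsum_X_pow_mul {d : ℕ} (hd : 0 < d) :
    ∑' j : ℕ, (X : R⟦X⟧) ^ (d * j) = PowerSeries.mk fun l => if d ∣ l then 1 else 0 := by
  have h : HasSum (fun l : ℕ => if d ∣ l then (X : R⟦X⟧) ^ l else 0)
      (PowerSeries.mk fun l => if d ∣ l then 1 else 0) := by
    convert! (PowerSeries.mk fun l => if d ∣ l then (1 : R) else 0).hasSum_of_monomials_self using 1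
    ext1 l
    split_ifs with hl <;> simp [hl, PowerSeries.X_pow_eq]
  rw [← (mul_right_injective₀ hd.ne').hasSum_iff] at h
  · simpa [Function.comp_def] using h.tsum_eq
  · exact fun l hl => if_neg fun ⟨c, hc⟩ => hl ⟨c, hc.symm⟩

end Semiring

section NormedField

variable {𝕜 : Type*} [NormedField 𝕜]

/-- The power series `A` converges absolutely at `z`, with sum `a`. -/
def HasValue (A : 𝕜⟦X⟧) (z a : 𝕜) : Prop :=
  (Summable fun n => ‖A.coeff n * z ^ n‖) ∧ HasSum (fun n => A.coeff n * z ^ n) a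

theorem hasValue_one (z : 𝕜) : HasValue 1 z 1 := by
  have h : HasSum (fun n => (1 : 𝕜⟦X⟧).coeff n * z ^ n) 1 := by
    simpa using hasSum_single (f := fun n => (1 : 𝕜⟦X⟧).coeff n * z ^ n) 0
      fun n hn => by simp [PowerSeries.coeff_one, hn]
  refine ⟨?_, h⟩
  exact summable_of_ne_finset_zero (s := {0}) fun n hn => by
    simp_all [PowerSeries.coeff_one]

theorem hasValue_tsum_X_pow_mul {d : ℕ} (hd : 0 < d) {z : 𝕜} (hz : ‖z‖ < 1) :
    HasValue (∑' j : ℕ, (X : 𝕜⟦X⟧) ^ (d * j)) z (1 - z ^ d)⁻¹ := by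
  rw [tsum_X_pow_mul 𝕜 hd]
  have hzd : ‖z ^ d‖ < 1 := by
    rw [norm_pow]; exact pow_lt_one₀ (norm_nonneg _) hz hd.ne'
  constructor
  · refine Summable.of_nonneg_of_le (fun _ => norm_nonneg _) (fun n => ?_)
      (summable_geometric_of_lt_one (norm_nonneg z) hz)
    rw [PowerSeries.coeff_mk]
    split_ifs <;> simp
  · rw [← (mul_right_injective₀ hd.ne').hasSum_iff]
    · simpa [Function.comp_def, pow_mul] using hasSum_geometric_of_norm_lt_one hzd
    · intro l hl
      rw [PowerSeries.coeff_mk, if_neg fun ⟨c, hc⟩ => hl ⟨c, hc.symm⟩, zero_mul]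

variable [CompleteSpace 𝕜] {z : 𝕜}

theorem HasValue.mul {A B : 𝕜⟦X⟧} {a b : 𝕜} (hA : HasValue A z a) (hB : HasValue B z b) :
    HasValue (A * B) z (a * b) := by
  have hcoeff : (fun n => (A * B).coeff n * z ^ n) = fun n =>
      ∑ kl ∈ Finset.HasAntidiagonal.antidiagonal n,
        (A.coeff kl.1 * z ^ kl.1) * (B.coeff kl.2 * z ^ kl.2) := by
    ext n
    rw [PowerSeries.coeff_mul, Finset.sum_mul]
    refine Finset.sum_congr rfl fun kl hkl => ?_
    rw [← Finset.HasAntidiagonal.mem_antidiagonal.mp hkl, pow_add]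
    ring
  have hs := summable_norm_sum_mul_antidiagonal_of_summable_norm hA.1 hB.1
  have ht := tsum_mul_tsum_eq_tsum_sum_antidiagonal_of_summable_norm hA.1 hB.1
  rw [hA.2.tsum_eq, hB.2.tsum_eq] at ht
  refine ⟨hs.congr fun n => congrArg norm (congrFun hcoeff n).symm, ?_⟩
  rw [hcoeff, ht]
  exact hs.of_norm.hasSum

theorem hasValue_mk_boundedCard (K : ℕ) (hz : ‖z‖ < 1) :
    HasValue (PowerSeries.mk fun n => (boundedCard K n : 𝕜)) z
      (∏ i ∈ Finset.range K, (1 - z ^ (i + 1))⁻¹) := by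
  rw [mk_boundedCard]
  induction K with
  | zero => simpa using hasValue_one z
  | succ K ih =>
    rw [Finset.prod_range_succ, Finset.prod_range_succ]
    exact ih.mul (hasValue_tsum_X_pow_mul K.succ_pos hz)

theorem hasSum_boundedCard_mul_pow (K : ℕ) (hz : ‖z‖ < 1) :
    HasSum (fun n => (boundedCard K n : 𝕜) * z ^ n)
      (∏ i ∈ Finset.range K, (1 - z ^ (i + 1))⁻¹) := by
  simpa only [PowerSeries.coeff_mk] using (hasValue_mk_boundedCard K hz).2

end NormedField

theorem summable_succ_pow_mul_geometric (c : ℕ) {r : ℝ} (h0 : 0 ≤ r) (h1 : r < 1) :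
    Summable fun i : ℕ => ((i : ℝ) + 1) ^ c * r ^ i := by
  rcases h0.eq_or_lt with rfl | h0
  · exact summable_of_ne_finset_zero (s := {0}) fun i hi => by simp_all
  have h := summable_pow_mul_geometric_of_norm_lt_one c (r := r) (by
    rwa [Real.norm_of_nonneg h0.le])
  refine (((summable_nat_add_iff 1).mpr h).mul_left r⁻¹).congr fun i => ?_
  push_cast
  rw [pow_succ r]
  field_simp

theorem summable_geometric_prod (a b : ℕ) {r : ℝ} (h0 : 0 ≤ r) (h1 : r < 1) :
    Summable fun ij : ℕ × ℕ =>
      ((ij.1 : ℝ) + 1) ^ a * ((ij.2 : ℝ) + 1) ^ b * r ^ ((ij.1 + 1) * (ij.2 + 1)) := by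
  refine Summable.of_nonneg_of_le (fun _ => by positivity) (fun ij => ?_)
    ((summable_succ_pow_mul_geometric a h0 h1).mul_of_nonneg
      (summable_succ_pow_mul_geometric b h0 h1)
      (fun _ => by positivity) (fun _ => by positivity))
  have : r ^ ((ij.1 + 1) * (ij.2 + 1)) ≤ r ^ (ij.1 + ij.2) :=
    pow_le_pow_of_le_one h0 h1.le (by nlinarith [Nat.zero_le (ij.1 * ij.2)])
  calc _ ≤ ((ij.1 : ℝ) + 1) ^ a * ((ij.2 : ℝ) + 1) ^ b * r ^ (ij.1 + ij.2) := by gcongr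
    _ = _ := by rw [pow_add]; ring

/-- The logarithm of Euler's product, `-∑ log (1 - z ^ j)`, expanded as the double series
`∑ z ^ (i * j) / i` over positive `i` and `j`; the index pairs are shifted by one. -/
noncomputable def logGenFun (z : ℂ) : ℂ :=
  ∑' ij : ℕ × ℕ, z ^ ((ij.1 + 1) * (ij.2 + 1)) / ((ij.1 : ℂ) + 1)

theorem summable_logGenFun {z : ℂ} (hz : ‖z‖ < 1) :
    Summable fun ij : ℕ × ℕ => z ^ ((ij.1 + 1) * (ij.2 + 1)) / ((ij.1 : ℂ) + 1) := by
  refine Summable.of_norm_bounded (summable_geometric_prod 0 0 (norm_nonneg z) hz) fun ij => ?_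
  have h : ‖((ij.1 : ℂ) + 1)‖ = (ij.1 : ℝ) + 1 := by
    rw [← Nat.cast_add_one, Complex.norm_natCast, Nat.cast_add_one]
  rw [norm_div, norm_pow, h, pow_zero, pow_zero, one_mul, one_mul]
  exact div_le_self (by positivity) (by linarith [Nat.cast_nonneg (α := ℝ) ij.1])

theorem norm_pow_succ_lt_one {z : ℂ} (hz : ‖z‖ < 1) (j : ℕ) : ‖z ^ (j + 1)‖ < 1 := by
  rw [norm_pow]
  exact pow_lt_one₀ (norm_nonneg _) hz j.succ_ne_zero

theorem hasSum_neg_log_one_sub_pow {z : ℂ} (hz : ‖z‖ < 1) :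
    HasSum (fun j : ℕ => -Complex.log (1 - z ^ (j + 1))) (logGenFun z) := by
  have h := (summable_logGenFun hz).hasSum
  rw [← (Equiv.prodComm ℕ ℕ).hasSum_iff] at h
  refine h.prod_fiberwise fun j => ?_
  convert Complex.hasSum_taylorSeries_neg_log' (norm_pow_succ_lt_one hz j) using 2 with i
  simp [← pow_mul, mul_comm]

theorem exp_neg_log_one_sub {z : ℂ} (hz : ‖z‖ < 1) :
    Complex.exp (-Complex.log (1 - z)) = (1 - z)⁻¹ := by
  rw [Complex.exp_neg, Complex.exp_log]
  intro h
  rw [sub_eq_zero] at h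
  simp [← h] at hz

theorem tendsto_prod_exp_logGenFun {z : ℂ} (hz : ‖z‖ < 1) :
    Tendsto (fun K => ∏ i ∈ Finset.range K, (1 - z ^ (i + 1))⁻¹) atTop
      (𝓝 (Complex.exp (logGenFun z))) := by
  refine ((Complex.continuous_exp.tendsto _).comp
    (hasSum_neg_log_one_sub_pow hz).tendsto_sum_nat).congr fun K => ?_
  rw [Function.comp_apply, Complex.exp_sum]
  exact Finset.prod_congr rfl fun i _ => exp_neg_log_one_sub (norm_pow_succ_lt_one hz i)

theorem p_nonneg (n : ℕ) : 0 ≤ p n := Nat.cast_nonneg _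

theorem summable_p_mul_pow {r : ℝ} (h0 : 0 ≤ r) (h1 : r < 1) :
    Summable fun n => p n * r ^ n := by
  have hr : ‖r‖ < 1 := by rwa [Real.norm_of_nonneg h0]
  obtain ⟨C, hC⟩ := (tendsto_prod_exp_logGenFun (z := r) (by simpa using hr)).norm.bddAbove_range
  refine summable_of_sum_range_le (c := C) (fun n => mul_nonneg (p_nonneg n) (by positivity))
    fun K => ?_
  calc ∑ n ∈ Finset.range K, p n * r ^ n
      = ∑ n ∈ Finset.range K, (boundedCard K n : ℝ) * r ^ n := by
        refine Finset.sum_congr rfl fun n hn => ?_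
        rw [boundedCard_of_le (Finset.mem_range.mp hn).le, p]
    _ ≤ ∏ i ∈ Finset.range K, (1 - r ^ (i + 1))⁻¹ :=
        sum_le_hasSum _ (fun n _ => by positivity) (hasSum_boundedCard_mul_pow K hr)
    _ ≤ ‖∏ i ∈ Finset.range K, (1 - (r : ℂ) ^ (i + 1))⁻¹‖ := by
        refine (le_abs_self _).trans_eq ?_
        rw [← Real.norm_eq_abs, ← Complex.norm_real]
        push_cast
        rfl
    _ ≤ C := hC ⟨K, rfl⟩

theorem hasSum_p_mul_pow {z : ℂ} (hz : ‖z‖ < 1) :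
    HasSum (fun n => (p n : ℂ) * z ^ n) (Complex.exp (logGenFun z)) := by
  have hs := summable_p_mul_pow (norm_nonneg z) hz
  have hs' : Summable fun n => (p n : ℂ) * z ^ n := by
    refine Summable.of_norm_bounded hs fun n => ?_
    rw [norm_mul, norm_pow, Complex.norm_real, Real.norm_of_nonneg (p_nonneg n)]
  have hlim : Tendsto (fun K => ∑' n, (boundedCard K n : ℂ) * z ^ n) atTop
      (𝓝 (∑' n, (p n : ℂ) * z ^ n)) := by
    refine tendsto_tsum_of_dominated_convergence hs (fun n => ?_)
      (Eventually.of_forall fun K n => ?_)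
    · refine tendsto_const_nhds.congr' ?_
      filter_upwards [eventually_ge_atTop n] with K hK
      rw [boundedCard_of_le hK, p, Complex.ofReal_natCast]
    · rw [norm_mul, norm_pow, Complex.norm_natCast]
      gcongr
      exact Nat.cast_le.mpr (boundedCard_le K n)
  simp only [(hasSum_boundedCard_mul_pow _ hz).tsum_eq] at hlim
  rw [← tendsto_nhds_unique hlim (tendsto_prod_exp_logGenFun hz)]
  exact hs'.hasSum

theorem mk_card_mul_pentagonalSeries (R : Type*) [CommRing R] [TopologicalSpace R] [T2Space R]
    [IsTopologicalRing R] :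
    (PowerSeries.mk fun n => (Fintype.card (Nat.Partition n) : R)) * pentagonalSeries R = 1 := by
  have h := hasProd_powerSeriesMk_card_restricted R (fun _ => True)
  have hcard (n : ℕ) : (restricted n (fun _ => True)).card = Fintype.card (Nat.Partition n) := by
    simp [restricted]
  simp only [hcard, if_true] at h
  refine (h.mul (WithPiTopology.hasProd_one_sub_X_pow R)).unique ?_
  convert! hasProd_one using 1
  ext1 i
  simp_rw [pow_mul]
  exact WithPiTopology.tsum_pow_mul_one_sub_of_constantCoeff_eq_zero (by simp)

end GeneratingFunction

section GeometricSums

variable {𝕜 : Type*} [RCLike 𝕜] {q : 𝕜}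

theorem hasSum_choose_mul_pow_succ (k : ℕ) (hq : ‖q‖ < 1) :
    HasSum (fun j : ℕ => ((j + k).choose k : 𝕜) * q ^ (j + 1)) (q / (1 - q) ^ (k + 1)) := by
  have h := (hasSum_choose_mul_geometric_of_norm_lt_one k hq).mul_left q
  simpa [pow_succ', div_eq_mul_inv, mul_left_comm] using h

theorem cast_add_two_choose_two (j : ℕ) : ((j + 2).choose 2 : 𝕜) = (j + 1) * (j + 2) / 2 := by
  rw [Nat.cast_choose_two]
  push_cast
  ring

theorem cast_add_three_choose_three (j : ℕ) :
    ((j + 3).choose 3 : 𝕜) = (j + 1) * (j + 2) * (j + 3) / 6 := by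
  have h : ((j : 𝕜) + 2 + 1) * ((j + 2).choose 2 : 𝕜) = ((j + 3).choose 3 : 𝕜) * (2 + 1) := by
    exact_mod_cast Nat.add_one_mul_choose_eq (j + 2) 2
  rw [cast_add_two_choose_two] at h
  linear_combination -h / 3

theorem one_sub_ne_zero_of_norm_lt_one (hq : ‖q‖ < 1) : 1 - q ≠ 0 := by
  rw [sub_ne_zero]
  rintro rfl
  simp at hq

theorem hasSum_pow_succ (hq : ‖q‖ < 1) : HasSum (fun j : ℕ => q ^ (j + 1)) (q / (1 - q)) := by
  simpa using hasSum_choose_mul_pow_succ 0 hq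

theorem hasSum_succ_mul_pow_succ (hq : ‖q‖ < 1) :
    HasSum (fun j : ℕ => ((j : 𝕜) + 1) * q ^ (j + 1)) (q / (1 - q) ^ 2) := by
  simpa using hasSum_choose_mul_pow_succ 1 hq

theorem hasSum_succ_sq_mul_pow_succ (hq : ‖q‖ < 1) :
    HasSum (fun j : ℕ => ((j : 𝕜) + 1) ^ 2 * q ^ (j + 1)) (q * (1 + q) / (1 - q) ^ 3) := by
  have h := ((hasSum_choose_mul_pow_succ 2 hq).mul_left 2).sub (hasSum_choose_mul_pow_succ 1 hq)
  have hq1 := one_sub_ne_zero_of_norm_lt_one hq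
  convert! h using 1
  · ext j
    rw [cast_add_two_choose_two, Nat.choose_one_right]
    push_cast
    ring
  · field_simp
    ring

theorem hasSum_succ_cube_mul_pow_succ (hq : ‖q‖ < 1) :
    HasSum (fun j : ℕ => ((j : 𝕜) + 1) ^ 3 * q ^ (j + 1))
      (q * (1 + 4 * q + q ^ 2) / (1 - q) ^ 4) := by
  have h := (((hasSum_choose_mul_pow_succ 3 hq).mul_left 6).sub
    ((hasSum_choose_mul_pow_succ 2 hq).mul_left 6)).add (hasSum_choose_mul_pow_succ 1 hq)
  have hq1 := one_sub_ne_zero_of_norm_lt_one hq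
  convert! h using 1
  · ext j
    rw [cast_add_three_choose_three, cast_add_two_choose_two, Nat.choose_one_right]
    push_cast
    ring
  · field_simp
    ring

theorem one_sub_sq_add_pos {q : ℝ} (h0 : 0 ≤ q) (h1 : q < 1) (v : ℝ) :
    0 < (1 - q) ^ 2 + 2 * q * (1 - cos v) := by
  have : 0 < 1 - q := by linarith
  have : 0 ≤ 1 - cos v := by linarith [cos_le_one v]
  positivity

theorem hasSum_pow_succ_mul_cos {q : ℝ} (h0 : 0 ≤ q) (h1 : q < 1) (v : ℝ) :
    HasSum (fun j : ℕ => q ^ (j + 1) * cos ((j + 1) * v))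
      (q * (cos v - q) / ((1 - q) ^ 2 + 2 * q * (1 - cos v))) := by
  obtain ⟨z, hz⟩ : ∃ z : ℂ, z = q * Complex.exp (v * Complex.I) := ⟨_, rfl⟩
  have hnorm : ‖z‖ < 1 := by
    rwa [hz, norm_mul, Complex.norm_exp_ofReal_mul_I, mul_one, Complex.norm_real,
      Real.norm_of_nonneg h0]
  have hre : z.re = q * cos v := by simp [hz, Complex.exp_ofReal_mul_I_re]
  have him : z.im = q * sin v := by simp [hz, Complex.exp_ofReal_mul_I_im]
  have hnormSq : Complex.normSq (1 - z) = (1 - q) ^ 2 + 2 * q * (1 - cos v) := by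
    rw [Complex.normSq_apply, Complex.sub_re, Complex.sub_im, hre, him, Complex.one_re,
      Complex.one_im]
    linear_combination q ^ 2 * sin_sq_add_cos_sq v
  convert! Complex.hasSum_re (hasSum_pow_succ hnorm) using 1
  · ext j
    rw [hz, mul_pow, ← Complex.exp_nat_mul]
    have harg : ((j + 1 : ℕ) : ℂ) * (v * Complex.I) = (((j + 1) * v : ℝ) : ℂ) * Complex.I := by
      push_cast; ring
    rw [harg, ← Complex.ofReal_pow, Complex.re_ofReal_mul, Complex.exp_ofReal_mul_I_re]
  · rw [Complex.div_re, hnormSq, Complex.sub_re, Complex.sub_im, hre, him, Complex.one_re,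
      Complex.one_im, ← add_div]
    congr 1
    linear_combination q ^ 2 * sin_sq_add_cos_sq v

theorem hasSum_pow_succ_mul_one_sub_cos {q : ℝ} (h0 : 0 ≤ q) (h1 : q < 1) (v : ℝ) :
    HasSum (fun j : ℕ => q ^ (j + 1) * (1 - cos ((j + 1) * v)))
      (q * (1 - cos v) * (1 + q) / ((1 - q) * ((1 - q) ^ 2 + 2 * q * (1 - cos v)))) := by
  have hq : 1 - q ≠ 0 := by linarith
  obtain ⟨N, hN⟩ : ∃ N, N = (1 - q) ^ 2 + 2 * q * (1 - cos v) := ⟨_, rfl⟩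
  have hpos := one_sub_sq_add_pos h0 h1 v
  have h := (hasSum_pow_succ (q := q) (by rwa [Real.norm_of_nonneg h0])).sub
    (hasSum_pow_succ_mul_cos h0 h1 v)
  convert! h using 1
  · ext j
    ring
  · rw [← hN] at hpos ⊢
    field_simp
    linear_combination -q * hN

end GeometricSums

section GeometricMoments

/-- The moment of order `a` of the geometric weights with ratio `exp (-y)`, a polylogarithm of
order `-a`. -/
noncomputable def geomMoment (a : ℕ) (y : ℝ) : ℝ := ∑' j : ℕ, ((j : ℝ) + 1) ^ a * exp (-y) ^ (j + 1)

/-- The quantity `(1 - q) ^ 2 / q` for `q = exp (-y)`, which behaves like `y ^ 2` at the origin. -/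
noncomputable def spread (y : ℝ) : ℝ := 2 * cosh y - 2

theorem one_sub_exp_neg_sq (y : ℝ) : (1 - exp (-y)) ^ 2 = spread y * exp (-y) := by
  have h : exp y * exp (-y) = 1 := by rw [← exp_add]; simp
  rw [spread, cosh_eq]
  linear_combination -h

theorem le_spread (y : ℝ) : y ^ 2 * (1 + y ^ 2 / 12 + (y ^ 2) ^ 2 / 360) ≤ spread y := by
  have h := sum_le_hasSum (Finset.range 4) (fun n _ => by
    rw [pow_mul]; positivity) (Real.hasSum_cosh y)
  simp only [Finset.sum_range_succ, Finset.sum_range_zero, Nat.factorial] at h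
  norm_num at h
  rw [spread]
  linarith

theorem sq_le_spread (y : ℝ) : y ^ 2 ≤ spread y := by
  refine (le_mul_of_one_le_right (sq_nonneg y) ?_).trans (le_spread y)
  rw [add_assoc]
  exact le_add_of_nonneg_right (by positivity)

variable {y : ℝ}

theorem spread_pos (hy : 0 < y) : 0 < spread y := lt_of_lt_of_le (by positivity) (sq_le_spread y)

theorem exp_neg_lt_one (hy : 0 < y) : exp (-y) < 1 := by
  rw [exp_lt_one_iff]; linarith

theorem one_sub_exp_neg_pos (hy : 0 < y) : 0 < 1 - exp (-y) := by
  linarith [exp_neg_lt_one hy]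

theorem norm_exp_neg_lt_one (hy : 0 < y) : ‖exp (-y)‖ < 1 := by
  rw [Real.norm_of_nonneg (exp_pos _).le]
  exact exp_neg_lt_one hy

theorem geomMoment_zero (hy : 0 < y) : geomMoment 0 y = exp (-y) / (1 - exp (-y)) := by
  simpa [geomMoment] using (hasSum_pow_succ (norm_exp_neg_lt_one hy)).tsum_eq

theorem geomMoment_one (hy : 0 < y) : geomMoment 1 y = exp (-y) / (1 - exp (-y)) ^ 2 := by
  simpa [geomMoment] using (hasSum_succ_mul_pow_succ (norm_exp_neg_lt_one hy)).tsum_eq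

theorem geomMoment_two (hy : 0 < y) :
    geomMoment 2 y = exp (-y) * (1 + exp (-y)) / (1 - exp (-y)) ^ 3 :=
  (hasSum_succ_sq_mul_pow_succ (norm_exp_neg_lt_one hy)).tsum_eq

theorem geomMoment_three (hy : 0 < y) :
    geomMoment 3 y = exp (-y) * (1 + 4 * exp (-y) + exp (-y) ^ 2) / (1 - exp (-y)) ^ 4 :=
  (hasSum_succ_cube_mul_pow_succ (norm_exp_neg_lt_one hy)).tsum_eq

theorem geomMoment_one_eq_inv_spread (hy : 0 < y) : geomMoment 1 y = 1 / spread y := by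
  have := spread_pos hy
  have := exp_pos (-y)
  rw [geomMoment_one hy, one_sub_exp_neg_sq]
  field_simp

theorem geomMoment_two_sq (hy : 0 < y) :
    geomMoment 2 y ^ 2 = (spread y + 4) / spread y ^ 3 := by
  have := spread_pos hy
  have := exp_pos (-y)
  have hnum : (1 + exp (-y)) ^ 2 = (spread y + 4) * exp (-y) := by
    linear_combination one_sub_exp_neg_sq y
  have hden : ((1 - exp (-y)) ^ 3) ^ 2 = (spread y * exp (-y)) ^ 3 := by
    rw [← one_sub_exp_neg_sq]; ring
  rw [geomMoment_two hy, div_pow, mul_pow, hnum, hden]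
  field_simp

theorem geomMoment_three_eq (hy : 0 < y) :
    geomMoment 3 y = (spread y + 6) / spread y ^ 2 := by
  have := spread_pos hy
  have := exp_pos (-y)
  have hnum : 1 + 4 * exp (-y) + exp (-y) ^ 2 = (spread y + 6) * exp (-y) := by
    linear_combination one_sub_exp_neg_sq y
  have hden : (1 - exp (-y)) ^ 4 = (spread y * exp (-y)) ^ 2 := by
    rw [← one_sub_exp_neg_sq]; ring
  rw [geomMoment_three hy, hnum, hden]
  field_simp

theorem two_div_le_coth_half (hy : 0 < y) : 2 / y ≤ (1 + exp (-y)) / (1 - exp (-y)) := by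
  have hinv : exp y * exp (-y) = 1 := by rw [← exp_add]; simp
  have hexp : 0 ≤ exp y - 1 := by linarith [add_one_le_exp y]
  have h := le_log_one_add_of_nonneg hexp
  rw [add_sub_cancel, log_exp, div_le_iff₀ (by positivity)] at h
  rw [div_le_div_iff₀ hy (one_sub_exp_neg_pos hy)]
  nlinarith [exp_pos (-y)]

theorem geomMoment_zero_le (hy : 0 < y) : geomMoment 0 y ≤ 1 / y := by
  have hinv : exp y * exp (-y) = 1 := by rw [← exp_add]; simp
  rw [geomMoment_zero hy, div_le_div_iff₀ (one_sub_exp_neg_pos hy) hy]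
  nlinarith [add_one_le_exp y, exp_pos (-y)]

theorem le_geomMoment_zero (hy : 0 < y) : 1 / y - 1 / 2 ≤ geomMoment 0 y := by
  have hcoth : (1 + exp (-y)) / (1 - exp (-y)) = 2 * geomMoment 0 y + 1 := by
    have := one_sub_exp_neg_pos hy
    rw [geomMoment_zero hy]
    field_simp
    ring
  have h := two_div_le_coth_half hy
  rw [hcoth, div_eq_mul_one_div] at h
  linarith

theorem geomMoment_one_le (hy : 0 < y) : geomMoment 1 y ≤ 1 / y ^ 2 := by
  rw [geomMoment_one_eq_inv_spread hy]
  exact one_div_le_one_div_of_le (by positivity) (sq_le_spread y)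

theorem add_four_div_cube_le {w D : ℝ} (hw : 0 < w) (hD : w * (1 + w / 12 + w ^ 2 / 360) ≤ D) :
    (D + 4) / D ^ 3 ≤ 4 / w ^ 3 := by
  obtain ⟨g, hg⟩ : ∃ g, g = 1 + w / 12 + w ^ 2 / 360 := ⟨_, rfl⟩
  have hg0 : 0 < g := hg ▸ by positivity
  rw [← hg] at hD
  have hD0 : 0 < D := lt_of_lt_of_le (by positivity) hD
  have hpoly : g * w + 4 ≤ 4 * g ^ 3 := by
    rw [hg]
    nlinarith [pow_pos hw 2, pow_pos hw 3, pow_pos hw 4, pow_pos hw 5, pow_pos hw 6]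
  calc (D + 4) / D ^ 3 = 1 / D ^ 2 + 4 / D ^ 3 := by field_simp
    _ ≤ 1 / (w * g) ^ 2 + 4 / (w * g) ^ 3 := by gcongr
    _ = (g * w + 4) / g ^ 3 / w ^ 3 := by field_simp
    _ ≤ 4 / w ^ 3 :=
        div_le_div_of_nonneg_right ((div_le_iff₀ (by positivity)).mpr hpoly) (by positivity)

theorem add_six_div_sq_le {w D : ℝ} (hw : 0 < w) (hD : w * (1 + w / 12 + w ^ 2 / 360) ≤ D) :
    (D + 6) / D ^ 2 ≤ 13 / 2 / w ^ 2 := by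
  obtain ⟨g, hg⟩ : ∃ g, g = 1 + w / 12 + w ^ 2 / 360 := ⟨_, rfl⟩
  have hg0 : 0 < g := hg ▸ by positivity
  rw [← hg] at hD
  have hD0 : 0 < D := lt_of_lt_of_le (by positivity) hD
  have hpoly : g * w + 6 ≤ 13 / 2 * g ^ 2 := by
    rw [hg]
    nlinarith [pow_pos hw 2, pow_pos hw 3, pow_pos hw 4, sq_nonneg (w - 10),
      sq_nonneg (w * (w - 10))]
  calc (D + 6) / D ^ 2 = 1 / D + 6 / D ^ 2 := by field_simp
    _ ≤ 1 / (w * g) + 6 / (w * g) ^ 2 := by gcongr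
    _ = (g * w + 6) / g ^ 2 / w ^ 2 := by field_simp
    _ ≤ 13 / 2 / w ^ 2 :=
        div_le_div_of_nonneg_right ((div_le_iff₀ (by positivity)).mpr hpoly) (by positivity)

theorem geomMoment_two_le (hy : 0 < y) : geomMoment 2 y ≤ 2 / y ^ 3 := by
  refine abs_le_of_sq_le_sq' ?_ (by positivity) |>.2
  calc geomMoment 2 y ^ 2 = (spread y + 4) / spread y ^ 3 := geomMoment_two_sq hy
    _ ≤ 4 / (y ^ 2) ^ 3 := add_four_div_cube_le (by positivity) (le_spread y)
    _ = (2 / y ^ 3) ^ 2 := by ring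

theorem geomMoment_three_le (hy : 0 < y) : geomMoment 3 y ≤ 13 / 2 / y ^ 4 := by
  calc geomMoment 3 y = (spread y + 6) / spread y ^ 2 := geomMoment_three_eq hy
    _ ≤ 13 / 2 / (y ^ 2) ^ 2 := add_six_div_sq_le (by positivity) (le_spread y)
    _ = 13 / 2 / y ^ 4 := by ring

theorem hasSum_exp_neg_pow_succ_mul_one_sub_cos (hy : 0 < y) (v : ℝ) :
    HasSum (fun j : ℕ => exp (-y) ^ (j + 1) * (1 - cos ((j + 1) * v)))
      ((1 + exp (-y)) / (1 - exp (-y)) * (1 - cos v) / (spread y + 2 * (1 - cos v))) := by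
  convert hasSum_pow_succ_mul_one_sub_cos (exp_pos _).le (exp_neg_lt_one hy) v using 1
  have hden : spread y * exp (-y) + 2 * exp (-y) * (1 - cos v) =
      exp (-y) * (spread y + 2 * (1 - cos v)) := by ring
  have := one_sub_exp_neg_pos hy
  have := exp_pos (-y)
  have : 0 < spread y + 2 * (1 - cos v) := by linarith [spread_pos hy, cos_le_one v]
  rw [one_sub_exp_neg_sq, hden]
  field_simp

end GeometricMoments

section Moments

/-- The modulus of the term indexed by `(i, j)` of the series `logGenFun` on the circle of radius
`exp (-x)`. -/
noncomputable def weight (x : ℝ) (ij : ℕ × ℕ) : ℝ :=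
  exp (-x) ^ ((ij.1 + 1) * (ij.2 + 1)) / ((ij.1 : ℝ) + 1)

/-- The exponent of `z` in the term indexed by `(i, j)` of the series `logGenFun`, that is, the
area of an `(i + 1)` by `(j + 1)` rectangle. -/
def area (ij : ℕ × ℕ) : ℝ := ((ij.1 : ℝ) + 1) * ((ij.2 : ℝ) + 1)

theorem weight_nonneg (x : ℝ) (ij : ℕ × ℕ) : 0 ≤ weight x ij := by
  rw [weight]; positivity

theorem area_nonneg (ij : ℕ × ℕ) : 0 ≤ area ij := by
  rw [area]; positivity

theorem weight_mul_area_pow_nonneg (a : ℕ) (x : ℝ) (ij : ℕ × ℕ) : 0 ≤ weight x ij * area ij ^ a :=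
  mul_nonneg (weight_nonneg x ij) (pow_nonneg (area_nonneg ij) a)

theorem weight_antitone {x y : ℝ} (h : x ≤ y) (ij : ℕ × ℕ) : weight y ij ≤ weight x ij := by
  rw [weight, weight]
  gcongr

theorem weight_mk (x : ℝ) (i j : ℕ) :
    weight x (i, j) = exp (-(((i : ℝ) + 1) * x)) ^ (j + 1) / ((i : ℝ) + 1) := by
  rw [weight, pow_mul, ← exp_nat_mul]
  congr 3
  push_cast
  ring_nf

/-- The moment of order `a` of the areas with respect to the weights: up to sign, the derivative
of order `a` of `fun x => logGenFun (exp (-x))`. -/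
noncomputable def moment (a : ℕ) (x : ℝ) : ℝ := ∑' ij, weight x ij * area ij ^ a

theorem hasSum_const_div_succ_sq (c : ℝ) :
    HasSum (fun i : ℕ => c / ((i : ℝ) + 1) ^ 2) (c * (π ^ 2 / 6)) := by
  have h := ((hasSum_nat_add_iff' 1).mpr hasSum_zeta_two).mul_left c
  simpa [div_eq_mul_inv] using h

theorem sum_range_le_tsum_of_fiber {f : ℕ × ℕ → ℝ} (hf : Summable f) (h0 : ∀ ij, 0 ≤ f ij)
    {g : ℕ → ℝ} (hg : ∀ i, HasSum (fun j => f (i, j)) (g i)) (K : ℕ) :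
    ∑ i ∈ Finset.range K, g i ≤ ∑' ij, f ij :=
  sum_le_hasSum _ (fun i _ => (hg i).nonneg fun j => h0 (i, j)) (hf.hasSum.prod_fiberwise hg)

theorem succ_mul_pos {x : ℝ} (hx : 0 < x) (i : ℕ) : 0 < ((i : ℝ) + 1) * x := by positivity

variable {x : ℝ}

theorem summable_weight_mul_area_pow (a : ℕ) (hx : 0 < x) :
    Summable fun ij => weight x ij * area ij ^ a := by
  refine Summable.of_nonneg_of_le (weight_mul_area_pow_nonneg a x) (fun ij => ?_)
    (summable_geometric_prod a a (exp_pos (-x)).le (exp_neg_lt_one hx))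
  have h : weight x ij ≤ exp (-x) ^ ((ij.1 + 1) * (ij.2 + 1)) :=
    div_le_self (by positivity) (by linarith [Nat.cast_nonneg (α := ℝ) ij.1])
  calc weight x ij * area ij ^ a ≤ exp (-x) ^ ((ij.1 + 1) * (ij.2 + 1)) * area ij ^ a :=
        mul_le_mul_of_nonneg_right h (pow_nonneg (area_nonneg ij) a)
    _ = _ := by rw [area, mul_pow]; ring

theorem hasSum_fiber_moment (a : ℕ) (hx : 0 < x) (i : ℕ) :
    HasSum (fun j => weight x (i, j) * area (i, j) ^ a)
      (((i : ℝ) + 1) ^ a / ((i : ℝ) + 1) * geomMoment a ((i + 1) * x)) := by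
  have hs := (summable_succ_pow_mul_geometric a (exp_pos _).le
    (exp_neg_lt_one (succ_mul_pos hx i))).mul_left (exp (-((i + 1) * x)))
  have hs' : Summable fun j : ℕ => ((j : ℝ) + 1) ^ a * exp (-((i + 1) * x)) ^ (j + 1) :=
    hs.congr fun j => by ring
  refine (hs'.hasSum.mul_left (((i : ℝ) + 1) ^ a / ((i : ℝ) + 1))).congr_fun fun j => ?_
  rw [weight_mk, area, mul_pow]
  ring

theorem sum_geomMoment_le_moment (a : ℕ) (hx : 0 < x) (K : ℕ) :
    ∑ i ∈ Finset.range K, ((i : ℝ) + 1) ^ a / ((i : ℝ) + 1) * geomMoment a ((i + 1) * x) ≤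
      moment a x :=
  sum_range_le_tsum_of_fiber (summable_weight_mul_area_pow a hx) (weight_mul_area_pow_nonneg a x)
    (hasSum_fiber_moment a hx) K

theorem moment_le_of_geomMoment_le {a : ℕ} {c : ℝ}
    (h : ∀ y : ℝ, 0 < y → geomMoment a y ≤ c / y ^ (a + 1)) (hx : 0 < x) :
    moment a x ≤ c / x ^ (a + 1) * (π ^ 2 / 6) := by
  refine hasSum_le (fun i => ?_) ((summable_weight_mul_area_pow a hx).hasSum.prod_fiberwise
    (hasSum_fiber_moment a hx)) (hasSum_const_div_succ_sq (c / x ^ (a + 1)))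
  calc ((i : ℝ) + 1) ^ a / ((i : ℝ) + 1) * geomMoment a ((i + 1) * x)
      ≤ ((i : ℝ) + 1) ^ a / ((i : ℝ) + 1) * (c / (((i : ℝ) + 1) * x) ^ (a + 1)) := by
        gcongr
        exact h _ (succ_mul_pos hx i)
    _ = c / x ^ (a + 1) / ((i : ℝ) + 1) ^ 2 := by
        rw [mul_pow]
        field_simp
        ring

theorem moment_zero_le (hx : 0 < x) : moment 0 x ≤ 1 / x * (π ^ 2 / 6) := by
  simpa using moment_le_of_geomMoment_le (a := 0) (c := 1)
    (fun y hy => by simpa using geomMoment_zero_le hy) hx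

theorem moment_one_le (hx : 0 < x) : moment 1 x ≤ 1 / x ^ 2 * (π ^ 2 / 6) :=
  moment_le_of_geomMoment_le (fun _ => geomMoment_one_le) hx

theorem moment_two_le (hx : 0 < x) : moment 2 x ≤ 2 / x ^ 3 * (π ^ 2 / 6) :=
  moment_le_of_geomMoment_le (fun _ => geomMoment_two_le) hx

theorem moment_three_le (hx : 0 < x) : moment 3 x ≤ 13 / 2 / x ^ 4 * (π ^ 2 / 6) :=
  moment_le_of_geomMoment_le (fun _ => geomMoment_three_le) hx

-- `205 / 144` is `1 + 1 / 4 + 1 / 9 + 1 / 16` and `25 / 12` is `1 + 1 / 2 + 1 / 3 + 1 / 4`.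
theorem le_moment_zero (hx : 0 < x) : 205 / 144 * (1 / x) - 25 / 24 ≤ moment 0 x := by
  have h : ∑ i ∈ Finset.range 4, ((i : ℝ) + 1) ^ 0 / ((i : ℝ) + 1) *
      (1 / (((i : ℝ) + 1) * x) - 1 / 2) = 205 / 144 * (1 / x) - 25 / 24 := by
    simp only [Finset.sum_range_succ, Finset.sum_range_zero]
    push_cast
    field_simp
    ring
  rw [← h]
  refine (Finset.sum_le_sum fun i _ => ?_).trans (sum_geomMoment_le_moment 0 hx 4)
  gcongr
  exact le_geomMoment_zero (succ_mul_pos hx i)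

theorem le_moment_one (hx : 0 < x) : exp (-x) / x ^ 2 ≤ moment 1 x := by
  have hpos := one_sub_exp_neg_pos hx
  calc exp (-x) / x ^ 2 ≤ exp (-x) / (1 - exp (-x)) ^ 2 := by
        gcongr
        linarith [add_one_le_exp (-x)]
    _ = geomMoment 1 x := (geomMoment_one hx).symm
    _ ≤ moment 1 x := by simpa using sum_geomMoment_le_moment 1 hx 1

theorem continuousOn_moment (a : ℕ) (hx : 0 < x) : ContinuousOn (moment a) (Set.Ici x) := by
  refine continuousOn_tsum (fun ij => ?_) (summable_weight_mul_area_pow a hx) fun ij y hy => ?_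
  · unfold weight
    fun_prop
  · rw [Real.norm_of_nonneg (weight_mul_area_pow_nonneg a y ij)]
    exact mul_le_mul_of_nonneg_right (weight_antitone hy ij) (pow_nonneg (area_nonneg ij) a)

theorem exists_moment_one_eq {N : ℝ} (hN : 1 ≤ N) : ∃ x, 0 < x ∧ moment 1 x = N := by
  have hs1 : 1 ≤ √N := Real.one_le_sqrt.mpr hN
  have hs : 0 < √N := by linarith
  have hsq : √N ^ 2 = N := Real.sq_sqrt (by linarith)
  have hpos : 0 < 1 / (2 * √N) := by positivity
  have hlr : 1 / (2 * √N) ≤ 2 / √N := by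
    rw [div_le_div_iff₀ (by positivity) hs]; linarith
  have hleft : N ≤ moment 1 (1 / (2 * √N)) := by
    refine le_trans ?_ (le_moment_one hpos)
    have hhalf : 1 / (2 * √N) ≤ 1 / 2 := by
      apply one_div_le_one_div_of_le <;> linarith
    have hexp := add_one_le_exp (-(1 / (2 * √N)))
    rw [div_pow, mul_pow, hsq, one_pow, div_div_eq_mul_div, div_one]
    nlinarith
  have hright : moment 1 (2 / √N) ≤ N := by
    refine (moment_one_le (by positivity)).trans ?_
    have hpi : π ^ 2 ≤ 16 := by nlinarith [pi_pos, pi_lt_four]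
    rw [div_pow, hsq]
    field_simp
    linarith
  obtain ⟨x, hx, hxN⟩ := intermediate_value_Icc' hlr
    ((continuousOn_moment 1 hpos).mono Set.Icc_subset_Ici_self) ⟨hright, hleft⟩
  exact ⟨x, hpos.trans_le hx.1, hxN⟩

end Moments

section Circle

open Complex (I)

/-- The logarithm of the ratio of the moduli of the generating function at `exp (-x)` and at
`exp (-x + θ * I)`. -/
noncomputable def decay (x θ : ℝ) : ℝ := ∑' ij, weight x ij * (1 - cos (area ij * θ))

/-- The amount by which the argument of the generating function at `exp (-x + θ * I)` falls short
of its linear part `moment 1 x * θ`. -/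
noncomputable def phase (x θ : ℝ) : ℝ := ∑' ij, weight x ij * (area ij * θ - sin (area ij * θ))

theorem weight_mul_one_sub_cos_nonneg (x θ : ℝ) (ij : ℕ × ℕ) :
    0 ≤ weight x ij * (1 - cos (area ij * θ)) :=
  mul_nonneg (weight_nonneg x ij) (by linarith [cos_le_one (area ij * θ)])

theorem abs_sub_sin_le (u : ℝ) : |u - sin u| ≤ |u| ^ 3 / 6 := by
  wlog hu : 0 ≤ u generalizing u
  · have h := this (-u) (by linarith)
    rwa [sin_neg, abs_neg, ← neg_sub', abs_neg] at h
  rw [abs_of_nonneg hu, abs_of_nonneg (by linarith [sin_le hu])]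
  linarith [sin_ge_sub_cube hu]

variable {x : ℝ}

theorem norm_exp_neg_mul_exp_lt_one (hx : 0 < x) (θ : ℝ) :
    ‖((exp (-x) : ℝ) : ℂ) * Complex.exp (θ * I)‖ < 1 := by
  rw [norm_mul, Complex.norm_exp_ofReal_mul_I, mul_one, Complex.norm_real]
  exact norm_exp_neg_lt_one hx

theorem summable_weight (hx : 0 < x) : Summable (weight x) := by
  simpa using summable_weight_mul_area_pow 0 hx

theorem summable_decay (hx : 0 < x) (θ : ℝ) :
    Summable fun ij => weight x ij * (1 - cos (area ij * θ)) :=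
  Summable.of_nonneg_of_le (weight_mul_one_sub_cos_nonneg x θ)
    (fun ij => mul_le_mul_of_nonneg_left (by linarith [neg_one_le_cos (area ij * θ)])
      (weight_nonneg x ij)) ((summable_weight hx).mul_right 2)

theorem summable_weight_mul_sin (hx : 0 < x) (θ : ℝ) :
    Summable fun ij => weight x ij * sin (area ij * θ) := by
  refine Summable.of_norm_bounded (summable_weight hx) fun ij => ?_
  rw [norm_mul, Real.norm_of_nonneg (weight_nonneg x ij)]
  exact mul_le_of_le_one_right (weight_nonneg x ij) (abs_sin_le_one _)

theorem phase_eq (hx : 0 < x) (θ : ℝ) :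
    phase x θ = moment 1 x * θ - ∑' ij, weight x ij * sin (area ij * θ) := by
  rw [phase, moment, ← tsum_mul_right, ← ((summable_weight_mul_area_pow 1 hx).mul_right
    θ).tsum_sub (summable_weight_mul_sin hx θ)]
  exact tsum_congr fun ij => by ring

theorem hasSum_weight_mul_cos (hx : 0 < x) (θ : ℝ) :
    HasSum (fun ij => weight x ij * cos (area ij * θ)) (moment 0 x - decay x θ) :=
  ((summable_weight_mul_area_pow 0 hx).hasSum.sub (summable_decay hx θ).hasSum).congr_fun
    fun ij => by ring

theorem hasSum_weight_mul_sin (hx : 0 < x) (θ : ℝ) :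
    HasSum (fun ij => weight x ij * sin (area ij * θ)) (moment 1 x * θ - phase x θ) := by
  rw [phase_eq hx, sub_sub_cancel]
  exact (summable_weight_mul_sin hx θ).hasSum

theorem logGenFun_eq (hx : 0 < x) (θ : ℝ) :
    logGenFun (((exp (-x) : ℝ) : ℂ) * Complex.exp (θ * I)) =
      ((moment 0 x - decay x θ : ℝ) : ℂ) + ((moment 1 x * θ - phase x θ : ℝ) : ℂ) * I := by
  refine HasSum.tsum_eq (((Complex.hasSum_ofReal.mpr (hasSum_weight_mul_cos hx θ)).add
    ((Complex.hasSum_ofReal.mpr (hasSum_weight_mul_sin hx θ)).mul_right I)).congr_fun fun ij => ?_)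
  have hangle : (((ij.1 + 1) * (ij.2 + 1) : ℕ) : ℂ) * (θ * I) = ((area ij * θ : ℝ) : ℂ) * I := by
    rw [area]
    push_cast
    ring
  rw [mul_pow, ← Complex.exp_nat_mul, hangle, Complex.exp_mul_I, weight]
  push_cast
  ring

theorem logGenFun_exp_neg (hx : 0 < x) : logGenFun ((exp (-x) : ℝ) : ℂ) = (moment 0 x : ℝ) := by
  simpa [decay, phase] using logGenFun_eq hx 0

theorem p_mul_exp_le (hx : 0 < x) (n : ℕ) : p n * exp (-x) ^ n ≤ exp (moment 0 x) := by
  have h := hasSum_p_mul_pow (z := ((exp (-x) : ℝ) : ℂ)) (by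
    simpa using norm_exp_neg_mul_exp_lt_one hx 0)
  rw [logGenFun_exp_neg hx] at h
  have h' : HasSum (fun n => p n * exp (-x) ^ n) (exp (moment 0 x)) := by exact_mod_cast h
  exact le_hasSum h' n fun m _ => mul_nonneg (p_nonneg m) (by positivity)

theorem decay_le (hx : 0 < x) (θ : ℝ) : decay x θ ≤ moment 2 x * θ ^ 2 / 2 := by
  rw [moment, ← tsum_mul_right, ← tsum_div_const]
  refine (summable_decay hx θ).tsum_le_tsum (fun ij => ?_)
    (((summable_weight_mul_area_pow 2 hx).mul_right _).div_const _)
  have h := one_sub_sq_div_two_le_cos (x := area ij * θ)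
  calc weight x ij * (1 - cos (area ij * θ)) ≤ weight x ij * ((area ij * θ) ^ 2 / 2) :=
        mul_le_mul_of_nonneg_left (by linarith) (weight_nonneg x ij)
    _ = _ := by ring

theorem abs_phase_le (hx : 0 < x) (θ : ℝ) : |phase x θ| ≤ moment 3 x * |θ| ^ 3 / 6 := by
  rw [moment, ← tsum_mul_right, ← tsum_div_const, phase, ← Real.norm_eq_abs]
  refine tsum_of_norm_bounded
    (((summable_weight_mul_area_pow 3 hx).mul_right _).div_const _).hasSum fun ij => ?_
  rw [norm_mul, Real.norm_of_nonneg (weight_nonneg x ij), Real.norm_eq_abs]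
  calc weight x ij * |area ij * θ - sin (area ij * θ)|
      ≤ weight x ij * (|area ij * θ| ^ 3 / 6) :=
        mul_le_mul_of_nonneg_left (abs_sub_sin_le _) (weight_nonneg x ij)
    _ = _ := by rw [abs_mul, abs_of_nonneg (area_nonneg ij)]; ring

theorem hasSum_fiber_decay (hx : 0 < x) (θ : ℝ) (i : ℕ) :
    HasSum (fun j => weight x (i, j) * (1 - cos (area (i, j) * θ)))
      ((1 + exp (-((i + 1) * x))) / (1 - exp (-((i + 1) * x))) * (1 - cos ((i + 1) * θ)) /
        (spread ((i + 1) * x) + 2 * (1 - cos ((i + 1) * θ))) / ((i : ℝ) + 1)) := by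
  refine ((hasSum_exp_neg_pow_succ_mul_one_sub_cos (succ_mul_pos hx i)
    ((i + 1) * θ)).div_const ((i : ℝ) + 1)).congr_fun fun j => ?_
  rw [weight_mk, area]
  ring_nf

theorem sum_range_le_decay (hx : 0 < x) (θ : ℝ) (K : ℕ) :
    ∑ i ∈ Finset.range K, 2 / (((i : ℝ) + 1) * x) * (1 - cos ((i + 1) * θ)) /
        (spread ((i + 1) * x) + 2 * (1 - cos ((i + 1) * θ))) / ((i : ℝ) + 1) ≤ decay x θ := by
  refine le_trans (Finset.sum_le_sum fun i _ => ?_) (sum_range_le_tsum_of_fiber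
    (summable_decay hx θ) (weight_mul_one_sub_cos_nonneg x θ) (hasSum_fiber_decay hx θ) K)
  have hy := succ_mul_pos hx i
  have hcos : 0 ≤ 1 - cos ((i + 1) * θ) := by linarith [cos_le_one (((i : ℝ) + 1) * θ)]
  have hcoth := two_div_le_coth_half hy
  have hspread := spread_pos hy
  gcongr ?_ * _ / _ / _

end Circle

section LogForm

/-- Log-convexity of the sequence `fun n => a n ^ (1 / n)` at the index `n`, in logarithmic form
and cleared of its denominators. -/
def RootLogConvexAt (a : ℕ → ℝ) (n : ℕ) : Prop :=
  (n : ℝ) ^ 2 * (2 * log (a n) - log (a (n - 1)) - log (a (n + 1))) +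
    n * (log (a (n + 1)) - log (a (n - 1))) ≤ 2 * log (a n)

variable {a : ℕ → ℝ} {n : ℕ}

theorem RootLogConvexAt.rpow_sq_le (h : RootLogConvexAt a n) (ha : ∀ k, 0 < a k) (hn : 2 ≤ n) :
    (a n ^ ((1 : ℝ) / (n : ℝ))) ^ 2 ≤
      a (n - 1) ^ ((1 : ℝ) / ((n : ℝ) - 1)) * a (n + 1) ^ ((1 : ℝ) / ((n : ℝ) + 1)) := by
  have hprev := ha (n - 1)
  have hcur := ha n
  have hnext := ha (n + 1)
  have hn' : (2 : ℝ) ≤ n := by exact_mod_cast hn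
  have hn0 : (0 : ℝ) < n := by linarith
  have hn1 : (0 : ℝ) < n - 1 := by linarith
  rw [← log_le_log_iff (by positivity) (by positivity), log_mul (by positivity) (by positivity),
    log_pow, log_rpow hcur, log_rpow hprev, log_rpow hnext, ← sub_nonneg]
  have hdiff : 1 / ((n : ℝ) - 1) * log (a (n - 1)) + 1 / ((n : ℝ) + 1) * log (a (n + 1)) -
      (2 : ℕ) * (1 / (n : ℝ) * log (a n)) =
      (2 * log (a n) - ((n : ℝ) ^ 2 * (2 * log (a n) - log (a (n - 1)) - log (a (n + 1))) +
        n * (log (a (n + 1)) - log (a (n - 1))))) / (n * (n - 1) * (n + 1)) := by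
    push_cast
    field_simp
    ring
  rw [hdiff]
  rw [RootLogConvexAt] at h
  exact div_nonneg (by linarith) (by positivity)

theorem rootLogConvexAt_of_pow_le (ha : ∀ k, 0 < a k) (hn : 1 ≤ n)
    (h : a n ^ (2 * (n ^ 2 - 1)) ≤ a (n - 1) ^ (n * (n + 1)) * a (n + 1) ^ (n * (n - 1))) :
    RootLogConvexAt a n := by
  have hprev := ha (n - 1)
  have hcur := ha n
  have hnext := ha (n + 1)
  have hlog := log_le_log (by positivity) h
  rw [log_mul (by positivity) (by positivity), log_pow, log_pow, log_pow] at hlog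
  push_cast [Nat.cast_sub hn, Nat.cast_sub (Nat.one_le_pow 2 n hn)] at hlog
  rw [RootLogConvexAt]
  linarith

theorem mul_log2_le_log {b : ℕ} (hb : b ≠ 0) : (693 / 1000 : ℝ) * Nat.log2 b ≤ log b := by
  have hpow : (2 : ℝ) ^ Nat.log2 b ≤ b := by exact_mod_cast Nat.log2_self_le hb
  have hlog := log_le_log (by positivity) hpow
  rw [log_pow] at hlog
  nlinarith [log_two_gt_d9, Nat.cast_nonneg (α := ℝ) (Nat.log2 b)]

-- `log t ≤ t - 1` bounds the left-hand side of `RootLogConvexAt` by a rational number.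
theorem rootLogConvexAt_of_rational_le (ha : ∀ k, 0 < a k) {L : ℝ} (hL : L ≤ log (a n))
    (h : (n : ℝ) ^ 2 * a n ^ 2 + n * a (n + 1) * a (n + 1) ≤
      (n : ℝ) ^ 2 * (a (n - 1) * a (n + 1)) + n * a (n - 1) * a (n + 1) +
        2 * L * (a (n - 1) * a (n + 1))) :
    RootLogConvexAt a n := by
  have hprev := ha (n - 1)
  have hcur := ha n
  have hnext := ha (n + 1)
  have hsnd : 2 * log (a n) - log (a (n - 1)) - log (a (n + 1)) ≤
      a n ^ 2 / (a (n - 1) * a (n + 1)) - 1 := by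
    have := log_le_sub_one_of_pos (x := a n ^ 2 / (a (n - 1) * a (n + 1))) (by positivity)
    rw [log_div (by positivity) (by positivity), log_pow, log_mul hprev.ne' hnext.ne'] at this
    push_cast at this
    linarith
  have hfst : log (a (n + 1)) - log (a (n - 1)) ≤ a (n + 1) / a (n - 1) - 1 := by
    have := log_le_sub_one_of_pos (x := a (n + 1) / a (n - 1)) (by positivity)
    rwa [log_div hnext.ne' hprev.ne'] at this
  have hrational : (n : ℝ) ^ 2 * (a n ^ 2 / (a (n - 1) * a (n + 1)) - 1) +
      n * (a (n + 1) / a (n - 1) - 1) ≤ 2 * L := by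
    have hdiff : 2 * L - ((n : ℝ) ^ 2 * (a n ^ 2 / (a (n - 1) * a (n + 1)) - 1) +
        n * (a (n + 1) / a (n - 1) - 1)) =
        ((n : ℝ) ^ 2 * (a (n - 1) * a (n + 1)) + n * a (n - 1) * a (n + 1) +
          2 * L * (a (n - 1) * a (n + 1)) -
          ((n : ℝ) ^ 2 * a n ^ 2 + n * a (n + 1) * a (n + 1))) / (a (n - 1) * a (n + 1)) := by
      field_simp
      ring
    rw [← sub_nonneg, hdiff]
    exact div_nonneg (by linarith) (by positivity)
  calc _ ≤ (n : ℝ) ^ 2 * (a n ^ 2 / (a (n - 1) * a (n + 1)) - 1) +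
        n * (a (n + 1) / a (n - 1) - 1) := by gcongr
    _ ≤ 2 * L := hrational
    _ ≤ 2 * log (a n) := by linarith

end LogForm

theorem p_pos (n : ℕ) : 0 < p n := by
  rw [p]
  exact_mod_cast Fintype.card_pos

section PentagonalPolynomial

open Polynomial

/-- The positive terms of `pentagonalPoly K` at a natural number `b`; the recursion is cheap to
evaluate. -/
def evenTerms (b : ℕ) : ℕ → ℕ
  | 0 => 0
  | j + 1 => evenTerms b j + (b ^ (j * (6 * j - 1)) + b ^ ((j + 1) * (6 * j + 7)))

/-- The negative terms of `pentagonalPoly K` at a natural number `b`, with their sign dropped. -/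
def oddTerms (b : ℕ) : ℕ → ℕ
  | 0 => 0
  | j + 1 => oddTerms b j + (b ^ ((2 * j + 1) * (3 * j + 1)) + b ^ ((2 * j + 1) * (3 * j + 2)))

/-- The partial sum of Euler's pentagonal number series with index in `[-2K, 2K)`. -/
noncomputable def pentagonalPoly (K : ℕ) : ℤ[X] :=
  ∑ k ∈ Finset.Ico (-(2 * K) : ℤ) (2 * K), C ((k.negOnePow : ℤˣ) : ℤ) * X ^ pentagonal k

theorem pentagonal_two_mul (j : ℕ) : pentagonal (2 * j) = j * (6 * j - 1) := by
  have h := two_mul_natCast_pentagonal (2 * j)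
  rcases j with _ | j
  · simp [pentagonal_def]
  · zify [show 1 ≤ 6 * (j + 1) by lia]
    push_cast at h ⊢
    linarith

theorem pentagonal_two_mul_add_one (j : ℕ) :
    pentagonal (2 * j + 1) = (2 * j + 1) * (3 * j + 1) := by
  have h := two_mul_natCast_pentagonal (2 * j + 1)
  zify
  linarith

theorem pentagonal_neg_two_mul_add_one (j : ℕ) :
    pentagonal (-(2 * j + 1)) = (2 * j + 1) * (3 * j + 2) := by
  have h := two_mul_natCast_pentagonal_neg (2 * j + 1)
  zify
  linarith

theorem pentagonal_neg_two_mul_add_two (j : ℕ) :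
    pentagonal (-(2 * j + 2)) = (j + 1) * (6 * j + 7) := by
  have h := two_mul_natCast_pentagonal_neg (2 * j + 2)
  zify
  linarith

theorem sum_Ico_neg_succ {M : Type*} [AddCommMonoid M] (f : ℤ → M) (K : ℕ) :
    ∑ k ∈ Finset.Ico (-(2 * (K + 1 : ℕ)) : ℤ) (2 * (K + 1 : ℕ)), f k =
      ∑ k ∈ Finset.Ico (-(2 * K) : ℤ) (2 * K), f k +
        (f (2 * K) + f (-(2 * K + 2)) + (f (2 * K + 1) + f (-(2 * K + 1)))) := by
  have hinsert : Finset.Ico (-(2 * (K + 1 : ℕ)) : ℤ) (2 * (K + 1 : ℕ)) =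
      insert (2 * K : ℤ) (insert (-(2 * K + 2) : ℤ) (insert (2 * K + 1 : ℤ)
        (insert (-(2 * K + 1) : ℤ) (Finset.Ico (-(2 * K) : ℤ) (2 * K))))) := by
    ext k
    simp only [Finset.mem_insert, Finset.mem_Ico]
    lia
  rw [hinsert, Finset.sum_insert (by simp; lia), Finset.sum_insert (by simp; lia),
    Finset.sum_insert (by simp; lia), Finset.sum_insert (by simp)]
  abel

theorem eval_pentagonalPoly (b K : ℕ) :
    (pentagonalPoly K).eval (b : ℤ) = (evenTerms b K : ℤ) - oddTerms b K := by
  induction K with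
  | zero => simp [pentagonalPoly, evenTerms, oddTerms]
  | succ K ih =>
    have heven : (2 * K + 2 : ℤ).negOnePow = 1 :=
      Int.negOnePow_even _ ⟨K + 1, by ring⟩
    have hodd : (2 * K + 1 : ℤ).negOnePow = -1 := Int.negOnePow_two_mul_add_one K
    rw [pentagonalPoly, sum_Ico_neg_succ, ← pentagonalPoly, eval_add, ih, evenTerms, oddTerms]
    simp only [eval_add, eval_mul, eval_C, eval_pow, eval_X, pentagonal_two_mul,
      pentagonal_two_mul_add_one, pentagonal_neg_two_mul_add_one, pentagonal_neg_two_mul_add_two,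
      Int.negOnePow_neg, hodd, heven, Int.negOnePow_two_mul]
    push_cast
    ring

theorem mem_Ico_of_pentagonal_lt {k : ℤ} {K : ℕ} (h : pentagonal k < K * (6 * K - 1)) :
    k ∈ Finset.Ico (-(2 * K) : ℤ) (2 * K) := by
  rw [← pentagonal_two_mul] at h
  have hk := two_mul_natCast_pentagonal k
  have hK := two_mul_natCast_pentagonal (2 * K)
  have : k * (3 * k - 1) < 2 * K * (3 * (2 * K) - 1) := by lia
  rw [Finset.mem_Ico]
  constructor <;> by_contra! hk'
  · nlinarith
  · nlinarith [Int.le_self_sq (k - 2 * K), mul_nonneg (sub_nonneg.2 hk') (Int.natCast_nonneg K)]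

theorem coeff_pentagonalPoly {i K : ℕ} (hi : i < K * (6 * K - 1)) :
    (pentagonalPoly K).coeff i = (PowerSeries.pentagonalSeries ℤ).coeff i := by
  simp only [pentagonalPoly, finsetSum_coeff, coeff_C_mul, coeff_X_pow]
  by_cases hr : i ∈ Set.range pentagonal
  · obtain ⟨k, rfl⟩ := hr
    rw [PowerSeries.coeff_pentagonalSeries_pentagonal]
    simp only [pentagonal_inj, mul_ite, mul_one, mul_zero, Finset.sum_ite_eq,
      if_pos (mem_Ico_of_pentagonal_lt hi), Int.cast_id]
  · rw [PowerSeries.coeff_pentagonalSeries_eq_zero _ hr]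
    refine Finset.sum_eq_zero fun k _ => ?_
    have hne : i ≠ pentagonal k := fun h => hr ⟨k, h.symm⟩
    simp [hne]

end PentagonalPolynomial

section Digits

variable {b : ℕ} {c : ℕ → ℕ}

theorem sum_mul_pow_lt {N : ℕ} (hc : ∀ i < N, c i < b) :
    ∑ i ∈ Finset.range N, c i * b ^ i < b ^ N := by
  induction N with
  | zero => simp
  | succ N ih =>
    have hlow := ih fun i hi => hc i (by lia)
    calc ∑ i ∈ Finset.range (N + 1), c i * b ^ i < b ^ N + c N * b ^ N := by
          rw [Finset.sum_range_succ]; lia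
      _ = (c N + 1) * b ^ N := by ring
      _ ≤ b * b ^ N := Nat.mul_le_mul_right _ (hc N (by lia))
      _ = b ^ (N + 1) := by ring

theorem sum_mul_pow_div_pow_mod {N n : ℕ} (hc : ∀ i < N, c i < b) (hn : n < N) :
    (∑ i ∈ Finset.range N, c i * b ^ i) / b ^ n % b = c n := by
  have hb : 0 < b := (Nat.zero_le _).trans_lt (hc n hn)
  induction N with
  | zero => lia
  | succ N ih =>
    rw [Finset.sum_range_succ]
    rcases Nat.lt_succ_iff_lt_or_eq.mp hn with h | rfl
    · obtain ⟨d, rfl⟩ : ∃ d, N = n + 1 + d := ⟨N - (n + 1), by lia⟩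
      have hsplit : c (n + 1 + d) * b ^ (n + 1 + d) =
          c (n + 1 + d) * b ^ d * b * b ^ n := by ring
      rw [hsplit, Nat.add_mul_div_right _ _ (Nat.pow_pos hb), Nat.add_mul_mod_self_right]
      exact ih (fun i hi => hc i (by lia)) h
    · rw [Nat.add_mul_div_right _ _ (Nat.pow_pos hb),
        Nat.div_eq_of_lt (sum_mul_pow_lt fun i hi => hc i (by lia)), zero_add,
        Nat.mod_eq_of_lt (hc n hn)]

theorem mod_pow_div_pow_mod {y k l : ℕ} (h : k < l) : y % b ^ l / b ^ k % b = y / b ^ k % b := by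
  obtain ⟨m, rfl⟩ : ∃ m, l = k + (1 + m) := ⟨l - k - 1, by lia⟩
  rw [pow_add, Nat.mod_mul_right_div_self, pow_add, pow_one, Nat.mod_mul_right_mod]

end Digits

section PackedPartitions

open Polynomial

/-- The base in which lists of values of the partition function are packed into one number. -/
def base : ℕ := 2 ^ 240

theorem base_pos : 0 < base := by
  rw [base]; positivity

-- `1 / 50` nearly minimizes the upper bound `(π ^ 2 / 6) / x + 4123 * x` for `log (p 4123)`.
theorem card_lt_base {n : ℕ} (hn : n ≤ 4123) : Fintype.card (Nat.Partition n) < base := by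
  have hm := moment_zero_le (x := 1 / 50) (by norm_num)
  have hpi : π ^ 2 ≤ 9.87 := by nlinarith [pi_lt_d4, pi_pos]
  have hn' : (n : ℝ) ≤ 4123 := by exact_mod_cast hn
  have hp : p n ≤ exp (moment 0 (1 / 50) + n / 50) := by
    rw [exp_add, ← div_le_iff₀ (exp_pos _), div_eq_mul_inv, ← exp_neg]
    convert! p_mul_exp_le (x := 1 / 50) (by norm_num) n using 2
    rw [← exp_nat_mul]
    ring_nf
  have hexp : exp (moment 0 (1 / 50) + n / 50) < (2 : ℝ) ^ 240 := by
    rw [← log_lt_log_iff (exp_pos _) (by positivity), log_exp, log_pow]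
    norm_num at hm ⊢
    linarith [log_two_gt_d9]
  have hlt := hp.trans_lt hexp
  rw [p] at hlt
  rw [base]
  exact_mod_cast hlt

/-- The number whose digits in the given base are the first `N` values of the partition function. -/
def packedCard (N : ℕ) : ℕ :=
  ∑ i ∈ Finset.range N, Fintype.card (Nat.Partition i) * base ^ i

theorem packedCard_digit {N n : ℕ} (hN : N ≤ 4124) (hn : n < N) :
    packedCard N / base ^ n % base = Fintype.card (Nat.Partition n) :=
  sum_mul_pow_div_pow_mod (c := fun i => Fintype.card (Nat.Partition i))
    (fun _ hi => card_lt_base (by lia)) hn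

theorem packedCard_lt {N : ℕ} (hN : N ≤ 4124) : packedCard N < base ^ N :=
  sum_mul_pow_lt fun _ hi => card_lt_base (by lia)

theorem base_pow_dvd_packedCard_mul_sub_one {N K : ℕ} (hN : N ≤ K * (6 * K - 1)) :
    (base : ℤ) ^ N ∣ (packedCard N : ℤ) * ((evenTerms base K : ℤ) - oddTerms base K) - 1 := by
  set genFun : PowerSeries ℤ := PowerSeries.mk fun n => (Fintype.card (Nat.Partition n) : ℤ)
    with hgenFun
  have hdvd : (X : ℤ[X]) ^ N ∣ PowerSeries.trunc N genFun * pentagonalPoly K - 1 := by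
    rw [X_pow_dvd_iff]
    intro d hd
    have hprod := congrArg (PowerSeries.coeff d) (mk_card_mul_pentagonalSeries ℤ)
    rw [PowerSeries.coeff_mul] at hprod
    rw [coeff_sub, coeff_mul, sub_eq_zero, coeff_one, ← PowerSeries.coeff_one, ← hprod]
    refine Finset.sum_congr rfl fun ij hij => ?_
    have hsum := Finset.HasAntidiagonal.mem_antidiagonal.mp hij
    rw [PowerSeries.coeff_trunc, if_pos (by lia), coeff_pentagonalPoly (by lia)]
  have heval : (PowerSeries.trunc N genFun).eval (base : ℤ) = packedCard N := by
    rw [packedCard, PowerSeries.trunc_apply, eval_finsetSum, Finset.range_eq_Ico]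
    push_cast
    refine Finset.sum_congr rfl fun i _ => ?_
    rw [eval_monomial, hgenFun, PowerSeries.coeff_mk]
  simpa only [eval_sub, eval_mul, eval_pentagonalPoly, eval_pow, eval_X, eval_one, heval] using
    eval_dvd (x := (base : ℤ)) hdvd

/-- Newton's iteration `y ↦ y * (2 - y * (e - o))` for the inverse of `e - o`, squaring the modulus
`m` in each of the given number of steps. It needs no proof of correctness, because its result is
certified by a multiplication in `packed_mul_evenTerms`. -/
def newton (e o : ℕ) : ℕ → ℕ → ℕ → ℕ
  | 0, _, y => y
  | i + 1, m, y => newton e o i (m * m) (y * (2 + y * o % m + (m - y * e % m)) % m)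

/-- The value of `packedCard 4124`, computed by inverting the pentagonal number series. The
`4096 = 2 ^ 12` tests starting at `27` use the `4124` digits up to `p 4123`, for which `13`
doublings of the precision and `27` terms of each of the four kinds are enough. -/
def packed : ℕ :=
  newton (evenTerms base 27) (oddTerms base 27) 13 (base ^ 2) 1 % base ^ 4124

set_option maxRecDepth 100000 in
theorem packed_mul_evenTerms :
    packed * evenTerms base 27 % base ^ 4124 =
      (1 + packed * oddTerms base 27) % base ^ 4124 := by
  decide +kernel

theorem packed_eq : packed = packedCard 4124 := by
  have hpacked : (base : ℤ) ^ 4124 ∣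
      (packed : ℤ) * ((evenTerms base 27 : ℤ) - oddTerms base 27) - 1 := by
    have h := Nat.modEq_iff_dvd.mp packed_mul_evenTerms.symm
    push_cast at h
    convert h using 1
    ring
  have hpackedCard := base_pow_dvd_packedCard_mul_sub_one (N := 4124) (K := 27) (by norm_num)
  have hdvd : (base : ℤ) ^ 4124 ∣ (packedCard 4124 : ℤ) - packed := by
    rw [← dvd_neg]
    convert (hpacked.mul_left (packedCard 4124 : ℤ)).sub
      (hpackedCard.mul_left (packed : ℤ)) using 1
    ring
  have hmodEq : packed ≡ packedCard 4124 [MOD base ^ 4124] := by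
    rw [Nat.modEq_iff_dvd]
    exact_mod_cast hdvd
  exact hmodEq.eq_of_lt_of_lt (Nat.mod_lt _ (pow_pos base_pos _)) (packedCard_lt le_rfl)

/-- A sufficient test for `RootLogConvexAt` at `n`, where the lowest digits of `y` are the terms
`n - 1`, `n` and `n + 1` of the sequence. The rational inequality is much cheaper than the
inequality of powers, but the partition function violates it at every even `n < 47`. Kernel
evaluation dictates the use of `cond` and `Nat.ble`. -/
def rootLogConvexTest (n y : ℕ) : Bool :=
  let a := y % base
  let b := y / base % base
  let c := y / base ^ 2 % base
  cond (Nat.ble 47 n)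
    (Nat.ble (500 * (n ^ 2 * b ^ 2 + n * c * c))
      (500 * (n ^ 2 * (a * c) + n * a * c) + 693 * (Nat.log2 b * (a * c))))
    (Nat.ble (b ^ (2 * (n ^ 2 - 1))) (a ^ (n * (n + 1)) * c ^ (n * (n - 1))))

theorem rootLogConvexAt_of_test {a : ℕ → ℕ} (ha : ∀ k, 0 < a k) {n y : ℕ} (hn : 1 ≤ n)
    (hy : ∀ k < 3, y / base ^ k % base = a (n - 1 + k)) (h : rootLogConvexTest n y = true) :
    RootLogConvexAt (fun k => (a k : ℝ)) n := by
  have hpos (k : ℕ) : (0 : ℝ) < a k := by exact_mod_cast ha k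
  have hprev := hy 0 (by norm_num)
  have hcur := hy 1 (by norm_num)
  have hnext := hy 2 (by norm_num)
  rw [pow_zero, Nat.div_one, add_zero] at hprev
  rw [pow_one, Nat.sub_add_cancel hn] at hcur
  rw [show n - 1 + 2 = n + 1 by lia] at hnext
  simp only [rootLogConvexTest, hprev, hcur, hnext] at h
  rcases le_or_gt 47 n with h47 | h47
  · rw [Nat.ble_eq_true_of_le h47, cond_true] at h
    have hle : (500 : ℝ) * (n ^ 2 * a n ^ 2 + n * a (n + 1) * a (n + 1)) ≤
        500 * (n ^ 2 * (a (n - 1) * a (n + 1)) + n * a (n - 1) * a (n + 1)) +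
          693 * (Nat.log2 (a n) * (a (n - 1) * a (n + 1))) := by
      exact_mod_cast Nat.le_of_ble_eq_true h
    exact rootLogConvexAt_of_rational_le hpos (mul_log2_le_log (ha n).ne') (by linarith)
  · have hble : Nat.ble 47 n = false :=
      Bool.eq_false_iff.mpr fun hb => h47.not_ge (Nat.le_of_ble_eq_true hb)
    rw [hble, cond_false] at h
    exact rootLogConvexAt_of_pow_le hpos hn (by exact_mod_cast Nat.le_of_ble_eq_true h)

/-- The test at the `2 ^ d` integers starting with `n`. Halving the list of digits keeps the
numbers short on which the tests operate. -/
def rootLogConvexTestRange : ℕ → ℕ → ℕ → Bool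
  | 0, n, y => rootLogConvexTest n y
  | d + 1, n, y =>
    cond (rootLogConvexTestRange d n (y % base ^ (2 ^ d + 2)))
      (rootLogConvexTestRange d (n + 2 ^ d) (y / base ^ (2 ^ d))) false

theorem rootLogConvexTest_congr {n y z : ℕ}
    (h : ∀ k < 3, y / base ^ k % base = z / base ^ k % base) :
    rootLogConvexTest n y = rootLogConvexTest n z := by
  have hprev := h 0 (by norm_num)
  have hcur := h 1 (by norm_num)
  have hnext := h 2 (by norm_num)
  simp only [pow_zero, Nat.div_one, pow_one] at hprev hcur
  simp only [rootLogConvexTest, hprev, hcur, hnext]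

theorem rootLogConvexTest_of_testRange {d n y : ℕ} (h : rootLogConvexTestRange d n y = true) :
    ∀ k < 2 ^ d, rootLogConvexTest (n + k) (y / base ^ k) = true := by
  induction d generalizing n y with
  | zero =>
    intro k hk
    obtain rfl : k = 0 := by simpa using hk
    simpa [rootLogConvexTestRange] using h
  | succ d ih =>
    intro k hk
    rw [rootLogConvexTestRange, Bool.cond_false_right, Bool.and_eq_true] at h
    obtain ⟨hlow, hhigh⟩ := h
    rcases lt_or_ge k (2 ^ d) with hkd | hkd
    · rw [← ih hlow k hkd]
      refine rootLogConvexTest_congr fun l hl => ?_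
      rw [Nat.div_div_eq_div_mul, Nat.div_div_eq_div_mul, ← pow_add, mod_pow_div_pow_mod (by lia)]
    · have := ih hhigh (k - 2 ^ d) (by rw [pow_succ] at hk; lia)
      rwa [Nat.div_div_eq_div_mul, ← pow_add, Nat.add_assoc, Nat.add_sub_cancel' hkd] at this

set_option maxRecDepth 100000 in
theorem rootLogConvexTestRange_packed :
    rootLogConvexTestRange 12 27 (packed / base ^ 26) = true := by
  decide +kernel

theorem rootLogConvexAt_of_le {n : ℕ} (hn : 27 ≤ n) (hn' : n ≤ 4122) : RootLogConvexAt p n := by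
  have htest := rootLogConvexTest_of_testRange rootLogConvexTestRange_packed (n - 27)
    (by norm_num; lia)
  rw [Nat.div_div_eq_div_mul, ← pow_add, show 26 + (n - 27) = n - 1 by lia,
    Nat.add_sub_cancel' hn] at htest
  refine rootLogConvexAt_of_test (fun _ => Fintype.card_pos) (by lia) (fun k hk => ?_) htest
  rw [Nat.div_div_eq_div_mul, ← pow_add, packed_eq, packedCard_digit le_rfl (by lia)]

end PackedPartitions

section Fourier

open Complex (I)
open MeasureTheory

/-- Up to a positive factor, the coefficient of index `moment 1 x + δ` of the generating function,
written as Cauchy's integral over the circle of radius `exp (-x)`. -/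
noncomputable def saddleIntegral (x δ : ℝ) : ℝ :=
  ∫ θ in -π..π, exp (-decay x θ) * cos (δ * θ + phase x θ)

variable {x : ℝ}

theorem continuous_decay (hx : 0 < x) : Continuous (decay x) := by
  refine continuous_tsum (fun ij => by fun_prop) ((summable_weight hx).mul_right 2) fun ij θ => ?_
  rw [Real.norm_of_nonneg (weight_mul_one_sub_cos_nonneg x θ ij)]
  exact mul_le_mul_of_nonneg_left (by linarith [neg_one_le_cos (area ij * θ)])
    (weight_nonneg x ij)

theorem continuous_phase (hx : 0 < x) : Continuous (phase x) := by
  rw [funext (phase_eq hx)]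
  refine (continuous_const.mul continuous_id).sub
    (continuous_tsum (fun ij => by fun_prop) (summable_weight hx) fun ij θ => ?_)
  rw [norm_mul, Real.norm_of_nonneg (weight_nonneg x ij)]
  exact mul_le_of_le_one_right (weight_nonneg x ij) (abs_sin_le_one _)

theorem hasSum_p_mul_cos (hx : 0 < x) (c θ : ℝ) :
    HasSum (fun m : ℕ => p m * exp (-x) ^ m * cos ((m - c) * θ))
      (exp (moment 0 x) * (exp (-decay x θ) * cos ((c - moment 1 x) * θ + phase x θ))) := by
  have hterm (m : ℕ) : (p m : ℂ) * (((exp (-x) : ℝ) : ℂ) * Complex.exp (θ * I)) ^ m *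
      Complex.exp ((-c * θ : ℝ) * I) =
      ((p m * exp (-x) ^ m : ℝ) : ℂ) * Complex.exp (((m - c) * θ : ℝ) * I) := by
    rw [mul_pow, ← Complex.exp_nat_mul, mul_assoc, mul_assoc, ← Complex.exp_add]
    push_cast
    ring_nf
  have hlog : logGenFun (((exp (-x) : ℝ) : ℂ) * Complex.exp (θ * I)) + ((-c * θ : ℝ) : ℂ) * I =
      ((moment 0 x - decay x θ : ℝ) : ℂ) +
        ((-((c - moment 1 x) * θ + phase x θ) : ℝ) : ℂ) * I := by
    rw [logGenFun_eq hx]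
    push_cast
    ring
  have h := Complex.hasSum_re ((hasSum_p_mul_pow (norm_exp_neg_mul_exp_lt_one hx θ)).mul_right
    (Complex.exp ((-c * θ : ℝ) * I)))
  simp only [hterm, Complex.re_ofReal_mul, Complex.exp_ofReal_mul_I_re] at h
  rwa [← Complex.exp_add, hlog, Complex.exp_add, ← Complex.ofReal_exp, Complex.re_ofReal_mul,
    Complex.exp_ofReal_mul_I_re, cos_neg, sub_eq_add_neg, exp_add, mul_assoc] at h

theorem integral_cos_int_mul (k : ℤ) :
    ∫ θ in -π..π, cos (k * θ) = if k = 0 then 2 * π else 0 := by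
  split_ifs with hk
  · simp [hk]
    ring
  · have hk' : (k : ℝ) ≠ 0 := by exact_mod_cast hk
    rw [intervalIntegral.integral_comp_mul_left (fun t => cos t) hk', integral_cos, mul_neg,
      sin_neg, sin_int_mul_pi]
    simp

theorem integral_mul_cos_natCast_sub (c : ℝ) (m N : ℕ) :
    ∫ θ in -π..π, c * cos ((m - (N : ℝ)) * θ) = if m = N then 2 * π * c else 0 := by
  have h := integral_cos_int_mul ((m : ℤ) - N)
  push_cast at h
  rw [intervalIntegral.integral_const_mul, h]
  by_cases hm : m = N
  · simp [hm]
    ring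
  · simp [hm, sub_eq_zero]

theorem saddleIntegral_natCast_sub_moment_one (hx : 0 < x) (N : ℕ) :
    saddleIntegral x (N - moment 1 x) = 2 * π * (p N * exp (-x) ^ N) * exp (-moment 0 x) := by
  have hnonneg (m : ℕ) : 0 ≤ p m * exp (-x) ^ m := mul_nonneg (p_nonneg m) (by positivity)
  have h := intervalIntegral.hasSum_integral_of_dominated_convergence (μ := volume)
    (a := -π) (b := π) (fun (m : ℕ) _ => p m * exp (-x) ^ m)
    (fun m => (by fun_prop : Continuous _).aestronglyMeasurable)
    (fun m => Filter.Eventually.of_forall fun θ _ => ?_)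
    (Filter.Eventually.of_forall fun _ _ =>
      summable_p_mul_pow (exp_pos (-x)).le (exp_neg_lt_one hx))
    intervalIntegrable_const
    (Filter.Eventually.of_forall fun θ _ => hasSum_p_mul_cos hx N θ)
  · simp only [integral_mul_cos_natCast_sub] at h
    have hcoeff := h.unique (hasSum_single N fun m hm => if_neg hm)
    rw [if_pos rfl, intervalIntegral.integral_const_mul, ← saddleIntegral] at hcoeff
    rw [← hcoeff, mul_right_comm, ← exp_add, add_neg_cancel, exp_zero, one_mul]
  · rw [norm_mul, Real.norm_of_nonneg (hnonneg m)]
    exact mul_le_of_le_one_right (hnonneg m) (abs_cos_le_one _)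

end Fourier

section GaussianMoments

open MeasureTheory

/-- The moment of order `2 * k` of the weight `exp (-b * θ ^ 2)` on the real line, in closed
form. -/
noncomputable def gaussianMoment (k : ℕ) (b : ℝ) : ℝ :=
  ((2 * k - 1).doubleFactorial : ℝ) / 2 ^ k * √π / (b ^ k * √b)

variable {a b : ℝ}

theorem integrable_pow_mul_gaussian (k : ℕ) (hb : 0 < b) :
    Integrable fun θ : ℝ => θ ^ k * exp (-b * θ ^ 2) := by
  simpa using integrable_rpow_mul_exp_neg_mul_sq hb (s := (k : ℝ))
    (by linarith [Nat.cast_nonneg (α := ℝ) k])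

theorem integral_even_pow_mul_gaussian (k : ℕ) (hb : 0 < b) :
    ∫ θ : ℝ, θ ^ (2 * k) * exp (-b * θ ^ 2) = gaussianMoment k b := by
  have heven : ∫ θ : ℝ, θ ^ (2 * k) * exp (-b * θ ^ 2) =
      2 * ∫ θ in Set.Ioi (0 : ℝ), θ ^ (2 * k) * exp (-b * θ ^ 2) := by
    rw [← integral_comp_abs (f := fun θ => θ ^ (2 * k) * exp (-b * θ ^ 2))]
    simp [pow_mul]
  have hGamma := integral_rpow_mul_exp_neg_mul_rpow (p := 2) (q := (2 * k : ℕ)) (b := b) two_pos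
    (by linarith [Nat.cast_nonneg (α := ℝ) (2 * k)]) hb
  have hhalf : (((2 * k : ℕ) : ℝ) + 1) / 2 = k + 1 / 2 := by push_cast; ring
  simp only [rpow_natCast, rpow_two, neg_div, hhalf] at hGamma
  rw [heven, hGamma, Real.Gamma_nat_add_half, rpow_neg hb.le, rpow_add hb, rpow_natCast,
    ← sqrt_eq_rpow, gaussianMoment]
  field_simp

theorem intervalIntegral_even_pow_mul_gaussian_le (k : ℕ) (hb : 0 < b) (ha : 0 ≤ a) :
    ∫ θ in -a..a, θ ^ (2 * k) * exp (-b * θ ^ 2) ≤ gaussianMoment k b := by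
  rw [← integral_even_pow_mul_gaussian k hb, intervalIntegral.integral_of_le (by linarith)]
  refine setIntegral_le_integral (integrable_pow_mul_gaussian _ hb)
    (Filter.Eventually.of_forall fun θ => ?_)
  simp only [Pi.zero_apply, pow_mul]
  positivity

-- Outside of `[-a, a]` the factor `1 - θ ^ 2 / a ^ 2` is nonpositive.
theorem le_intervalIntegral_gaussian (hb : 0 < b) (ha : 0 < a) :
    gaussianMoment 0 b - 1 / a ^ 2 * gaussianMoment 1 b ≤ ∫ θ in -a..a, exp (-b * θ ^ 2) := by
  have hint₀ := integrable_pow_mul_gaussian 0 hb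
  have hint₂ := (integrable_pow_mul_gaussian 2 hb).const_mul (1 / a ^ 2)
  simp only [pow_zero, one_mul] at hint₀
  have hsub : ∫ θ : ℝ, (exp (-b * θ ^ 2) - 1 / a ^ 2 * (θ ^ 2 * exp (-b * θ ^ 2))) =
      gaussianMoment 0 b - 1 / a ^ 2 * gaussianMoment 1 b := by
    rw [integral_sub hint₀ hint₂, integral_const_mul, ← integral_even_pow_mul_gaussian 0 hb,
      ← integral_even_pow_mul_gaussian 1 hb]
    simp
  rw [← hsub, intervalIntegral.integral_of_le (by linarith), ← integral_indicator measurableSet_Ioc]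
  refine integral_mono (hint₀.sub hint₂) (hint₀.indicator measurableSet_Ioc) fun θ => ?_
  by_cases hθ : θ ∈ Set.Ioc (-a) a
  · simp only [Set.indicator_of_mem hθ]
    exact sub_le_self _ (by positivity)
  · simp only [Set.indicator_of_notMem hθ]
    have hsq : a ^ 2 ≤ θ ^ 2 := by
      rw [Set.mem_Ioc, not_and_or, not_lt, not_le] at hθ
      rcases hθ with h | h <;> nlinarith
    have hone : 1 ≤ 1 / a ^ 2 * θ ^ 2 := by
      rwa [one_div_mul_eq_div, one_le_div (by positivity)]
    linarith [mul_le_mul_of_nonneg_right hone (exp_pos (-b * θ ^ 2)).le]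

end GaussianMoments

section NumericalBounds

theorem pi_sq_div_six_le : π ^ 2 / 6 ≤ 329 / 200 := by
  nlinarith [pi_lt_d4, pi_pos]

theorem exp_neg_natCast_le (k : ℕ) : exp (-(k : ℝ)) ≤ ((2.718 : ℝ) ^ k)⁻¹ := by
  rw [exp_neg, ← exp_one_pow]
  gcongr
  linarith [exp_one_gt_d9]

theorem exp_neg_mul_pow_le_of_le {c t T : ℝ} {k : ℕ} (ht : 0 < t) (hT : t ≤ T) (hk : k ≤ c * t) :
    exp (-(c * T)) * T ^ k ≤ exp (-(c * t)) * t ^ k := by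
  have hratio : (T / t) ^ k ≤ exp (c * T - c * t) :=
    calc (T / t) ^ k ≤ exp (T / t - 1) ^ k := by
          gcongr
          · exact div_nonneg (by linarith) ht.le
          · linarith [add_one_le_exp (T / t - 1)]
      _ = exp (k * (T / t - 1)) := (exp_nat_mul _ k).symm
      _ ≤ exp (c * t * (T / t - 1)) := by
          gcongr
          rw [sub_nonneg, one_le_div ht]
          exact hT
      _ = exp (c * T - c * t) := by
          congr 1
          field_simp
  calc exp (-(c * T)) * T ^ k = exp (-(c * T)) * (T / t) ^ k * t ^ k := by
        rw [mul_assoc, ← mul_pow, div_mul_cancel₀ _ ht.ne']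
    _ ≤ exp (-(c * T)) * exp (c * T - c * t) * t ^ k := by gcongr
    _ = exp (-(c * t)) * t ^ k := by rw [← exp_add]; ring_nf

variable {T : ℝ}

theorem exp_one_sub_mul_le (hT : 50 ≤ T) : exp (1 - 9 / 25 * T) ≤ 14 / T ^ 5 := by
  have : 0 < T := by linarith
  rw [le_div_iff₀ (by positivity)]
  calc exp (1 - 9 / 25 * T) * T ^ 5 = exp 1 * (exp (-(9 / 25 * T)) * T ^ 5) := by
        rw [sub_eq_add_neg, exp_add, mul_assoc]
    _ ≤ exp 1 * (exp (-(9 / 25 * 50)) * 50 ^ 5) := by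
        gcongr exp 1 * ?_
        exact exp_neg_mul_pow_le_of_le (by norm_num) hT (by norm_num)
    _ = exp (-(17 : ℕ)) * 50 ^ 5 := by
        rw [← mul_assoc, ← exp_add]
        norm_num
    _ ≤ ((2.718 : ℝ) ^ 17)⁻¹ * 50 ^ 5 := by
        gcongr
        exact exp_neg_natCast_le 17
    _ ≤ 14 := by norm_num

theorem exp_neg_mul_le (hT : 50 ≤ T) : exp (-(7 / 10 * T)) ≤ 13 / 10 / T ^ 9 := by
  have : 0 < T := by linarith
  rw [le_div_iff₀ (by positivity)]
  calc exp (-(7 / 10 * T)) * T ^ 9 ≤ exp (-(7 / 10 * 50)) * 50 ^ 9 :=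
        exp_neg_mul_pow_le_of_le (by norm_num) hT (by norm_num)
    _ = exp (-(35 : ℕ)) * 50 ^ 9 := by norm_num
    _ ≤ ((2.718 : ℝ) ^ 35)⁻¹ * 50 ^ 9 := by
        gcongr
        exact exp_neg_natCast_le 35
    _ ≤ 13 / 10 := by norm_num

end NumericalBounds

section DecayBounds

theorem spread_le {y : ℝ} (hy : 0 ≤ y) (hy' : y ≤ 2 / 25) : spread y ≤ 627 / 625 * y ^ 2 := by
  have hcosh := cosh_le_exp_half_sq y
  have hsq : y ^ 2 ≤ 4 / 625 := by nlinarith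
  have hexp := (abs_le.mp (abs_exp_sub_one_sub_id_le (x := y ^ 2 / 2)
    (by rw [abs_le]; constructor <;> nlinarith))).2
  rw [spread]
  nlinarith [sq_nonneg y]

theorem le_one_sub_cos {v : ℝ} (hv : |v| ≤ 6 / 25) : 497 / 1000 * v ^ 2 ≤ 1 - cos v := by
  have hcos := (abs_le.mp (cos_bound (hv.trans (by norm_num)))).2
  have hsq : v ^ 2 ≤ 36 / 625 := by nlinarith [sq_abs v, abs_nonneg v]
  have hfour : |v| ^ 4 = v ^ 2 * v ^ 2 := by rw [← sq_abs]; ring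
  rw [hfour] at hcos
  nlinarith [sq_nonneg v]

theorem le_fiber_decay {y v : ℝ} (hy : 0 < y) (hy' : y ≤ 2 / 25) (hv : |v| ≤ 6 / 25) :
    99 / 100 * (1 / y) * (v ^ 2 / (y ^ 2 + v ^ 2)) ≤
      2 / y * (1 - cos v) / (spread y + 2 * (1 - cos v)) := by
  have hspread := spread_le hy.le hy'
  have hspread0 := spread_pos hy
  have hcos := le_one_sub_cos hv
  have hcos0 : 0 ≤ 1 - cos v := by linarith [cos_le_one v]
  have hcross : 99 / 100 * v ^ 2 * (spread y + 2 * (1 - cos v)) ≤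
      2 * (1 - cos v) * (y ^ 2 + v ^ 2) := by
    have h₁ := mul_le_mul_of_nonneg_left hspread (sq_nonneg v)
    have h₂ := mul_le_mul_of_nonneg_left hcos (sq_nonneg y)
    have h₃ := mul_nonneg hcos0 (sq_nonneg v)
    nlinarith [mul_nonneg (sq_nonneg y) (sq_nonneg v)]
  calc 99 / 100 * (1 / y) * (v ^ 2 / (y ^ 2 + v ^ 2)) =
        1 / y * (99 / 100 * v ^ 2 / (y ^ 2 + v ^ 2)) := by ring
    _ ≤ 1 / y * (2 * (1 - cos v) / (spread y + 2 * (1 - cos v))) := by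
        refine mul_le_mul_of_nonneg_left ?_ (by positivity)
        rwa [div_le_div_iff₀ (by positivity) (by positivity)]
    _ = 2 / y * (1 - cos v) / (spread y + 2 * (1 - cos v)) := by ring

variable {T θ : ℝ}

-- Four terms of the series suffice, since `1 + 1 / 4 + 1 / 9 + 1 / 16` exceeds `140 / 99`.
theorem le_decay_of_abs_mul_le (hT : 50 ≤ T) (hθ : |θ| * T ≤ 3) :
    7 / 5 * T * ((θ * T) ^ 2 / (1 + (θ * T) ^ 2)) ≤ decay T⁻¹ θ := by
  have : 0 < T := by linarith
  have hx : T⁻¹ ≤ 50⁻¹ := inv_anti₀ (by norm_num) hT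
  have : |θ| ≤ 3 / 50 := by nlinarith [abs_nonneg θ]
  have hterm (m : ℝ) (hm : 0 < m) (hm' : m ≤ 4) :
      99 / 100 * T * ((θ * T) ^ 2 / (1 + (θ * T) ^ 2)) / m ^ 2 ≤
        2 / (m * T⁻¹) * (1 - cos (m * θ)) / (spread (m * T⁻¹) + 2 * (1 - cos (m * θ))) / m := by
    have h := le_fiber_decay (y := m * T⁻¹) (v := m * θ) (by positivity) (by nlinarith)
      (by rw [abs_mul, abs_of_pos hm]; nlinarith [abs_nonneg θ])
    refine le_of_eq_of_le ?_ (div_le_div_of_nonneg_right h hm.le)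
    have : 0 < 1 + (θ * T) ^ 2 := by positivity
    have : 0 < (m * T⁻¹) ^ 2 + (m * θ) ^ 2 := by positivity
    field_simp
  calc 7 / 5 * T * ((θ * T) ^ 2 / (1 + (θ * T) ^ 2))
      ≤ ∑ i ∈ Finset.range 4,
          99 / 100 * T * ((θ * T) ^ 2 / (1 + (θ * T) ^ 2)) / ((i : ℝ) + 1) ^ 2 := by
        have : 0 ≤ T * ((θ * T) ^ 2 / (1 + (θ * T) ^ 2)) := by positivity
        norm_num [Finset.sum_range_succ]
        linarith
    _ ≤ _ := Finset.sum_le_sum fun i hi => hterm (i + 1) (by positivity) (by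
        have := Finset.mem_range.mp hi
        exact_mod_cast (by lia : i + 1 ≤ 4))
    _ ≤ decay T⁻¹ θ := sum_range_le_decay (by positivity) θ 4

theorem le_decay_center (hT : 50 ≤ T) (hθ : |θ| * T ≤ 3 / 5) : T ^ 3 * θ ^ 2 ≤ decay T⁻¹ θ := by
  refine le_trans ?_ (le_decay_of_abs_mul_le hT (hθ.trans (by norm_num)))
  have hsq : (θ * T) ^ 2 ≤ 9 / 25 := by
    rw [mul_pow, ← sq_abs, ← mul_pow]
    nlinarith [mul_nonneg (abs_nonneg θ) (by linarith : 0 ≤ T)]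
  rw [← mul_div_assoc, le_div_iff₀ (by positivity)]
  nlinarith [mul_nonneg (by linarith : 0 ≤ T) (sq_nonneg (θ * T))]

theorem le_decay_middle (hT : 50 ≤ T) (hθ : 3 / 5 ≤ |θ| * T) (hθ' : |θ| * T ≤ 3) :
    9 / 25 * T ≤ decay T⁻¹ θ := by
  refine le_trans ?_ (le_decay_of_abs_mul_le hT hθ')
  have hsq : 9 / 25 ≤ (θ * T) ^ 2 := by
    rw [mul_pow, ← sq_abs, ← mul_pow]
    nlinarith
  rw [← mul_div_assoc, le_div_iff₀ (by positivity)]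
  nlinarith

theorem le_decay_far (hT : 50 ≤ T) (hθ : 3 ≤ |θ| * T) (hθ' : |θ| ≤ π) :
    7 / 10 * T ≤ decay T⁻¹ θ := by
  have hpos : 0 < T := by linarith
  have hx : T⁻¹ ≤ 50⁻¹ := inv_anti₀ (by norm_num) hT
  refine le_trans ?_ (sum_range_le_decay (inv_pos.mpr hpos) θ 1)
  simp only [Finset.sum_range_one, Nat.cast_zero, zero_add, one_mul, div_one]
  have hspread := spread_le (inv_pos.mpr hpos).le (hx.trans (by norm_num))
  have hspread0 := spread_pos (inv_pos.mpr hpos)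
  have hsq : 9 * T⁻¹ ^ 2 ≤ θ ^ 2 := by
    have : 3 * T⁻¹ ≤ |θ| := by rwa [← div_eq_mul_inv, div_le_iff₀ hpos]
    rw [← sq_abs θ]
    nlinarith [inv_pos.mpr hpos]
  have hpi : 1 / 5 ≤ 2 / π ^ 2 := by
    rw [div_le_div_iff₀ (by norm_num) (by positivity)]
    nlinarith [pi_lt_d2, pi_pos]
  have hcos : 1 / 5 * θ ^ 2 ≤ 1 - cos θ := by
    nlinarith [sq_nonneg θ, cos_le_one_sub_mul_cos_sq hθ']
  have hx2 : 0 < T⁻¹ ^ 2 := by positivity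
  rw [le_div_iff₀ (by nlinarith), show 2 / T⁻¹ * (1 - cos θ) = T * (2 * (1 - cos θ)) by
    field_simp]
  nlinarith

theorem exp_neg_decay_le (hT : 50 ≤ T) (hθ : |θ| ≤ π) :
    exp (-decay T⁻¹ θ) ≤ exp (-T ^ 3 * θ ^ 2) +
      exp (1 - 9 / 25 * T) * exp (-(T ^ 2 / 9) * θ ^ 2) + exp (-(7 / 10 * T)) := by
  have hcenter0 := exp_pos (-T ^ 3 * θ ^ 2)
  have hmiddle0 : 0 < exp (1 - 9 / 25 * T) * exp (-(T ^ 2 / 9) * θ ^ 2) := by positivity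
  have hfar0 := exp_pos (-(7 / 10 * T))
  rcases le_total (|θ| * T) (3 / 5) with h | h
  · have hcenter := exp_le_exp.mpr (neg_le_neg (le_decay_center hT h))
    rw [← neg_mul] at hcenter
    linarith
  rcases le_total (|θ| * T) 3 with h' | h'
  · have hsq : T ^ 2 * θ ^ 2 ≤ 9 := by
      rw [← sq_abs θ, ← mul_pow]
      nlinarith
    have hmiddle : exp (-decay T⁻¹ θ) ≤ exp (1 - 9 / 25 * T) * exp (-(T ^ 2 / 9) * θ ^ 2) := by
      rw [← Real.exp_add, exp_le_exp]
      linarith [le_decay_middle hT h h']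
    linarith
  · have hfar := exp_le_exp.mpr (neg_le_neg (le_decay_far hT h' hθ))
    linarith

theorem decay_le_mul_sq (hT : 0 < T) : decay T⁻¹ θ ≤ 33 / 20 * T ^ 3 * θ ^ 2 := by
  have hmoment : moment 2 T⁻¹ ≤ 2 * T ^ 3 * (33 / 20) := by
    refine (moment_two_le (inv_pos.mpr hT)).trans ?_
    rw [inv_pow, div_inv_eq_mul]
    have hpi : π ^ 2 / 6 ≤ 33 / 20 := pi_sq_div_six_le.trans (by norm_num)
    gcongr
  refine (decay_le (inv_pos.mpr hT) θ).trans ?_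
  nlinarith [sq_nonneg θ]

theorem abs_phase_le_mul_pow (hT : 0 < T) : |phase T⁻¹ θ| ≤ 9 / 5 * T ^ 4 * |θ| ^ 3 := by
  have hmoment : moment 3 T⁻¹ ≤ 13 / 2 * T ^ 4 * (33 / 20) := by
    refine (moment_three_le (inv_pos.mpr hT)).trans ?_
    rw [inv_pow, div_inv_eq_mul]
    have hpi : π ^ 2 / 6 ≤ 33 / 20 := pi_sq_div_six_le.trans (by norm_num)
    gcongr
  refine (abs_phase_le (inv_pos.mpr hT) θ).trans ?_
  have : 0 ≤ |θ| ^ 3 := by positivity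
  have : 0 ≤ T ^ 4 * |θ| ^ 3 := by positivity
  nlinarith

end DecayBounds

section SaddleIntegrals

open MeasureTheory

theorem gaussianMoment_nonneg (k : ℕ) {b : ℝ} (hb : 0 ≤ b) : 0 ≤ gaussianMoment k b := by
  rw [gaussianMoment]; positivity

theorem gaussianMoment_eq_mul_gaussianMoment_zero (k : ℕ) (b : ℝ) :
    gaussianMoment k b =
      ((2 * k - 1).doubleFactorial : ℝ) / 2 ^ k / b ^ k * gaussianMoment 0 b := by
  simp only [gaussianMoment, mul_zero, Nat.zero_sub, Nat.doubleFactorial, Nat.cast_one, pow_zero,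
    div_one, one_mul]
  ring

theorem sqrt_pi_le_two : √π ≤ 2 := by
  rw [sqrt_le_left (by norm_num)]
  linarith [pi_le_four]

variable {T : ℝ}

theorem gaussianMoment_zero_pow_three (hT : 0 ≤ T) : gaussianMoment 0 (T ^ 3) = √π / (T * √T) := by
  rw [gaussianMoment, show T ^ 3 = T ^ 2 * T by ring, sqrt_mul (sq_nonneg T), sqrt_sq hT]
  simp

theorem gaussianMoment_zero_pow_three_pos (hT : 0 < T) : 0 < gaussianMoment 0 (T ^ 3) := by
  rw [gaussianMoment_zero_pow_three hT.le]; positivity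

theorem sqrt_le_div_seven (hT : 50 ≤ T) : √T ≤ T / 7 := by
  rw [sqrt_le_left (by linarith)]
  nlinarith

theorem exp_one_sub_mul_gaussianMoment_le (hT : 50 ≤ T) (l : ℕ) :
    exp (1 - 9 / 25 * T) * gaussianMoment l (T ^ 2 / 9) ≤
      6 * ((2 * l - 1).doubleFactorial / 2 ^ l) * 9 ^ l * T⁻¹ ^ (2 * l + 4) *
        gaussianMoment 0 (T ^ 3) := by
  have hpos : 0 < T := by linarith
  have hsqrt : √(T ^ 2 / 9) = T / 3 := by
    rw [show T ^ 2 / 9 = (T / 3) ^ 2 by ring, sqrt_sq (by positivity)]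
  have hzero : gaussianMoment 0 (T ^ 2 / 9) ≤ 3 / 7 * T * gaussianMoment 0 (T ^ 3) := by
    rw [gaussianMoment_zero_pow_three hpos.le, gaussianMoment, hsqrt]
    calc _ = 3 * √π / T := by simp; ring
      _ = 3 * √T * (√π / (T * √T)) := by field_simp
      _ ≤ 3 * (T / 7) * (√π / (T * √T)) := by gcongr; exact sqrt_le_div_seven hT
      _ = 3 / 7 * T * (√π / (T * √T)) := by ring
  rw [gaussianMoment_eq_mul_gaussianMoment_zero l]
  calc exp (1 - 9 / 25 * T) * (((2 * l - 1).doubleFactorial : ℝ) / 2 ^ l / (T ^ 2 / 9) ^ l *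
        gaussianMoment 0 (T ^ 2 / 9))
      ≤ 14 / T ^ 5 * (((2 * l - 1).doubleFactorial : ℝ) / 2 ^ l / (T ^ 2 / 9) ^ l *
        (3 / 7 * T * gaussianMoment 0 (T ^ 3))) := by
        gcongr
        · exact mul_nonneg (by positivity) (gaussianMoment_nonneg 0 (by positivity))
        · exact exp_one_sub_mul_le hT
    _ = _ := by
        rw [inv_pow, pow_add, pow_mul, div_pow]
        field_simp
        ring

theorem two_pi_mul_exp_neg_mul_le (hT : 50 ≤ T) :
    2 * π * exp (-(7 / 10 * T)) ≤ 3 / 4 * T⁻¹ ^ 7 * gaussianMoment 0 (T ^ 3) := by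
  have hpos : 0 < T := by linarith
  have hmoment := gaussianMoment_zero_pow_three_pos hpos
  have hpi : π ≤ 2 * √π := by
    nlinarith [sq_sqrt pi_pos.le, sqrt_nonneg π, sqrt_pi_le_two]
  have hsqrt : √π ≤ T ^ 2 / 7 * gaussianMoment 0 (T ^ 3) := by
    rw [gaussianMoment_zero_pow_three hpos.le]
    calc √π = T * √T * (√π / (T * √T)) := by field_simp
      _ ≤ T * (T / 7) * (√π / (T * √T)) := by gcongr; exact sqrt_le_div_seven hT
      _ = T ^ 2 / 7 * (√π / (T * √T)) := by ring
  calc 2 * π * exp (-(7 / 10 * T))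
      ≤ 2 * (2 * (T ^ 2 / 7 * gaussianMoment 0 (T ^ 3))) * (13 / 10 / T ^ 9) := by
        gcongr
        · exact hpi.trans (by gcongr)
        · exact exp_neg_mul_le hT
    _ = 26 / 35 * (T⁻¹ ^ 7 * gaussianMoment 0 (T ^ 3)) := by
        rw [inv_pow]
        field_simp
        ring
    _ ≤ 3 / 4 * (T⁻¹ ^ 7 * gaussianMoment 0 (T ^ 3)) :=
        mul_le_mul_of_nonneg_right (by norm_num) (by positivity)
    _ = _ := by ring

theorem exp_neg_decay_mul_le (hT : 50 ≤ T) {θ s a b c : ℝ} (hθ : |θ| ≤ π) (hs : 0 ≤ s)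
    (ha : s ≤ a) (hb : s ≤ b) (hc : s ≤ c) :
    exp (-decay T⁻¹ θ) * s ≤ exp (-T ^ 3 * θ ^ 2) * a +
      exp (1 - 9 / 25 * T) * exp (-(T ^ 2 / 9) * θ ^ 2) * b + exp (-(7 / 10 * T)) * c := by
  refine (mul_le_mul_of_nonneg_right (exp_neg_decay_le hT hθ) hs).trans ?_
  rw [add_mul, add_mul]
  gcongr

theorem intervalIntegral_gaussian_comb_le (k l : ℕ) {a b c₁ c₂ : ℝ} (ha : 0 < a) (hb : 0 < b)
    (hc₁ : 0 ≤ c₁) (hc₂ : 0 ≤ c₂) (c₃ : ℝ) :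
    ∫ θ in -π..π, (c₁ * (θ ^ (2 * k) * exp (-a * θ ^ 2)) +
        c₂ * (θ ^ (2 * l) * exp (-b * θ ^ 2)) + c₃) ≤
      c₁ * gaussianMoment k a + c₂ * gaussianMoment l b + 2 * π * c₃ := by
  have hint₁ : IntervalIntegrable (fun θ => c₁ * (θ ^ (2 * k) * exp (-a * θ ^ 2)))
      volume (-π) π := (by fun_prop : Continuous _).intervalIntegrable _ _
  have hint₂ : IntervalIntegrable (fun θ => c₂ * (θ ^ (2 * l) * exp (-b * θ ^ 2)))
      volume (-π) π := (by fun_prop : Continuous _).intervalIntegrable _ _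
  calc ∫ θ in -π..π, (c₁ * (θ ^ (2 * k) * exp (-a * θ ^ 2)) +
          c₂ * (θ ^ (2 * l) * exp (-b * θ ^ 2)) + c₃)
      = c₁ * (∫ θ in -π..π, θ ^ (2 * k) * exp (-a * θ ^ 2)) +
          c₂ * (∫ θ in -π..π, θ ^ (2 * l) * exp (-b * θ ^ 2)) + 2 * π * c₃ := by
        rw [intervalIntegral.integral_add (hint₁.add hint₂) intervalIntegrable_const,
          intervalIntegral.integral_add hint₁ hint₂, intervalIntegral.integral_const]
        simp only [intervalIntegral.integral_const_mul, smul_eq_mul]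
        ring
    _ ≤ c₁ * gaussianMoment k a + c₂ * gaussianMoment l b + 2 * π * c₃ := by
        gcongr
        exacts [intervalIntegral_even_pow_mul_gaussian_le k ha pi_pos.le,
          intervalIntegral_even_pow_mul_gaussian_le l hb pi_pos.le]

theorem integral_exp_neg_decay_mul_le (hT : 50 ≤ T) {s : ℝ → ℝ} (hs : Continuous s)
    (hs0 : ∀ θ, 0 ≤ s θ) {c₁ c₂ c₃ : ℝ} {k l : ℕ} (h₁ : ∀ θ, s θ ≤ c₁ * θ ^ (2 * k))
    (h₂ : ∀ θ, s θ ≤ c₂ * θ ^ (2 * l)) (h₃ : ∀ θ, |θ| ≤ π → s θ ≤ c₃) :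
    ∫ θ in -π..π, exp (-decay T⁻¹ θ) * s θ ≤
      (c₁ * ((2 * k - 1).doubleFactorial / 2 ^ k / (T ^ 3) ^ k) +
        c₂ * (6 * ((2 * l - 1).doubleFactorial / 2 ^ l) * 9 ^ l * T⁻¹ ^ (2 * l + 4)) +
        c₃ * (3 / 4 * T⁻¹ ^ 7)) * gaussianMoment 0 (T ^ 3) := by
  have hpos : 0 < T := by linarith
  have hdecay := continuous_decay (inv_pos.mpr hpos)
  have hc₁ : 0 ≤ c₁ := by simpa using (hs0 1).trans (h₁ 1)
  have hc₂ : 0 ≤ c₂ := by simpa using (hs0 1).trans (h₂ 1)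
  have hc₃ : 0 ≤ c₃ := (hs0 0).trans (h₃ 0 (by simpa using pi_pos.le))
  calc ∫ θ in -π..π, exp (-decay T⁻¹ θ) * s θ
      ≤ ∫ θ in -π..π, (c₁ * (θ ^ (2 * k) * exp (-T ^ 3 * θ ^ 2)) +
          c₂ * exp (1 - 9 / 25 * T) * (θ ^ (2 * l) * exp (-(T ^ 2 / 9) * θ ^ 2)) +
          c₃ * exp (-(7 / 10 * T))) :=
        intervalIntegral.integral_mono_on (by linarith [pi_pos])
          ((by fun_prop : Continuous _).intervalIntegrable _ _)
          ((by fun_prop : Continuous _).intervalIntegrable _ _) fun θ hθ =>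
            (exp_neg_decay_mul_le hT (abs_le.mpr hθ) (hs0 θ) (h₁ θ) (h₂ θ)
              (h₃ θ (abs_le.mpr hθ))).trans_eq (by ring)
    _ ≤ c₁ * gaussianMoment k (T ^ 3) +
          c₂ * exp (1 - 9 / 25 * T) * gaussianMoment l (T ^ 2 / 9) +
          2 * π * (c₃ * exp (-(7 / 10 * T))) :=
        intervalIntegral_gaussian_comb_le k l (by positivity) (by positivity) hc₁
          (by positivity) _
    _ = c₁ * gaussianMoment k (T ^ 3) +
          c₂ * (exp (1 - 9 / 25 * T) * gaussianMoment l (T ^ 2 / 9)) +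
          c₃ * (2 * π * exp (-(7 / 10 * T))) := by ring
    _ ≤ _ := by
        rw [gaussianMoment_eq_mul_gaussianMoment_zero k, add_mul, add_mul, mul_assoc c₁,
          mul_assoc c₂, mul_assoc c₃]
        have hmiddle := exp_one_sub_mul_gaussianMoment_le hT l
        have hfar := two_pi_mul_exp_neg_mul_le hT
        gcongr

end SaddleIntegrals

section SaddleIntegralBounds

open MeasureTheory

variable {x T : ℝ}

theorem intervalIntegrable_exp_neg_decay_mul (hx : 0 < x) {s : ℝ → ℝ} (hs : Continuous s) :
    IntervalIntegrable (fun θ => exp (-decay x θ) * s θ) volume (-π) π := by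
  have := continuous_decay hx
  exact (by fun_prop : Continuous _).intervalIntegrable _ _

theorem two_mul_saddleIntegral_zero_sub_sub_le (hx : 0 < x) :
    2 * saddleIntegral x 0 - saddleIntegral x 1 - saddleIntegral x (-1) ≤
      ∫ θ in -π..π, exp (-decay x θ) * θ ^ 2 := by
  have hphase := continuous_phase hx
  have hint (δ : ℝ) := intervalIntegrable_exp_neg_decay_mul hx
    (by fun_prop : Continuous fun θ => cos (δ * θ + phase x θ))
  simp only [saddleIntegral]
  rw [← intervalIntegral.integral_const_mul,
    ← intervalIntegral.integral_sub ((hint 0).const_mul 2) (hint 1),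
    ← intervalIntegral.integral_sub (((hint 0).const_mul 2).sub (hint 1)) (hint (-1))]
  refine intervalIntegral.integral_mono_on (by linarith [pi_pos])
    ((((hint 0).const_mul 2).sub (hint 1)).sub (hint (-1)))
    (intervalIntegrable_exp_neg_decay_mul hx (by fun_prop)) fun θ _ => ?_
  calc 2 * (exp (-decay x θ) * cos (0 * θ + phase x θ)) -
        exp (-decay x θ) * cos (1 * θ + phase x θ) - exp (-decay x θ) * cos (-1 * θ + phase x θ)
      = exp (-decay x θ) * (2 * (1 - cos θ) * cos (phase x θ)) := by
        simp only [zero_mul, zero_add, one_mul, neg_one_mul, cos_add, cos_neg, sin_neg]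
        ring
    _ ≤ exp (-decay x θ) * (2 * (1 - cos θ)) := by
        have hcos := mul_le_of_le_one_right
          (by linarith [cos_le_one θ] : 0 ≤ 2 * (1 - cos θ)) (cos_le_one (phase x θ))
        gcongr
    _ ≤ exp (-decay x θ) * θ ^ 2 := by
        gcongr
        linarith [one_sub_sq_div_two_le_cos (x := θ)]

theorem abs_saddleIntegral_neg_one_sub_le (hx : 0 < x) :
    |saddleIntegral x (-1) - saddleIntegral x 1| ≤
      2 * ∫ θ in -π..π, exp (-decay x θ) * |sin θ * sin (phase x θ)| := by
  have hphase := continuous_phase hx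
  have hint (δ : ℝ) := intervalIntegrable_exp_neg_decay_mul hx
    (by fun_prop : Continuous fun θ => cos (δ * θ + phase x θ))
  rw [saddleIntegral, saddleIntegral, ← intervalIntegral.integral_sub (hint (-1)) (hint 1),
    ← intervalIntegral.integral_const_mul]
  refine (intervalIntegral.abs_integral_le_integral_abs (by linarith [pi_pos])).trans_eq
    (intervalIntegral.integral_congr fun θ _ => ?_)
  have heq : exp (-decay x θ) * cos (-1 * θ + phase x θ) -
      exp (-decay x θ) * cos (1 * θ + phase x θ) =
        exp (-decay x θ) * (2 * (sin θ * sin (phase x θ))) := by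
    simp only [one_mul, neg_one_mul, cos_add, cos_neg, sin_neg]
    ring
  simp only [heq, abs_mul, abs_of_pos (exp_pos _), abs_two]
  ring

theorem integral_exp_neg_decay_mul_sq_le (hT : 50 ≤ T) :
    ∫ θ in -π..π, exp (-decay T⁻¹ θ) * θ ^ 2 ≤
      501 / 1000 * T⁻¹ ^ 3 * gaussianMoment 0 (T ^ 3) := by
  have hinv : T⁻¹ ≤ 50⁻¹ := inv_anti₀ (by norm_num) hT
  have hpos : 0 < T⁻¹ := inv_pos.mpr (by linarith)
  have hmoment := gaussianMoment_zero_pow_three_pos (by linarith : 0 < T)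
  have hsq (θ : ℝ) (hθ : |θ| ≤ π) : θ ^ 2 ≤ 10 := by
    rw [← sq_abs]
    nlinarith [pi_lt_d2, abs_nonneg θ]
  calc ∫ θ in -π..π, exp (-decay T⁻¹ θ) * θ ^ 2
      ≤ _ :=
        integral_exp_neg_decay_mul_le (k := 1) (l := 1) hT (by fun_prop) sq_nonneg
          (fun θ => (one_mul (θ ^ 2)).ge) (fun θ => (one_mul (θ ^ 2)).ge) hsq
    _ = (1 / 2 + 27 * T⁻¹ ^ 3 + 15 / 2 * T⁻¹ ^ 4) * T⁻¹ ^ 3 * gaussianMoment 0 (T ^ 3) := by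
        congr 1
        norm_num [Nat.doubleFactorial]
        ring
    _ ≤ (1 / 2 + 27 * 50⁻¹ ^ 3 + 15 / 2 * 50⁻¹ ^ 4) * T⁻¹ ^ 3 * gaussianMoment 0 (T ^ 3) := by
        gcongr
    _ ≤ 501 / 1000 * T⁻¹ ^ 3 * gaussianMoment 0 (T ^ 3) := by
        gcongr
        norm_num

theorem integral_exp_neg_decay_mul_abs_sin_mul_sin_le (hT : 50 ≤ T) :
    ∫ θ in -π..π, exp (-decay T⁻¹ θ) * |sin θ * sin (phase T⁻¹ θ)| ≤
      1353 / 1000 * T⁻¹ ^ 2 * gaussianMoment 0 (T ^ 3) := by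
  have hinv : T⁻¹ ≤ 50⁻¹ := inv_anti₀ (by norm_num) hT
  have hpos : 0 < T := by linarith
  have hphase := continuous_phase (inv_pos.mpr hpos)
  have hmoment := gaussianMoment_zero_pow_three_pos hpos
  have hone (θ : ℝ) : |sin θ * sin (phase T⁻¹ θ)| ≤ 1 := by
    rw [abs_mul]
    exact mul_le_one₀ (abs_sin_le_one _) (abs_nonneg _) (abs_sin_le_one _)
  have hfour (θ : ℝ) : |sin θ * sin (phase T⁻¹ θ)| ≤ 9 / 5 * T ^ 4 * θ ^ (2 * 2) :=
    calc |sin θ * sin (phase T⁻¹ θ)| = |sin θ| * |sin (phase T⁻¹ θ)| := abs_mul _ _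
      _ ≤ |θ| * (9 / 5 * T ^ 4 * |θ| ^ 3) := by
          have hsin := abs_sin_le_abs (x := θ)
          have hphase_le := abs_phase_le_mul_pow (θ := θ) hpos
          exact mul_le_mul hsin (abs_sin_le_abs.trans hphase_le) (abs_nonneg _) (abs_nonneg _)
      _ = 9 / 5 * T ^ 4 * |θ| ^ (2 * 2) := by ring
      _ = 9 / 5 * T ^ 4 * θ ^ (2 * 2) := by rw [(even_two_mul 2).pow_abs]
  calc ∫ θ in -π..π, exp (-decay T⁻¹ θ) * |sin θ * sin (phase T⁻¹ θ)|
      ≤ _ :=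
        integral_exp_neg_decay_mul_le (c₂ := 1) (l := 0) hT (by fun_prop) (fun _ => abs_nonneg _)
          hfour (by simpa using hone) fun θ _ => hone θ
    _ = (27 / 20 + 6 * T⁻¹ ^ 2 + 3 / 4 * T⁻¹ ^ 5) * T⁻¹ ^ 2 * gaussianMoment 0 (T ^ 3) := by
        congr 1
        norm_num [Nat.doubleFactorial]
        field_simp
        ring
    _ ≤ (27 / 20 + 6 * 50⁻¹ ^ 2 + 3 / 4 * 50⁻¹ ^ 5) * T⁻¹ ^ 2 * gaussianMoment 0 (T ^ 3) := by
        gcongr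
    _ ≤ 1353 / 1000 * T⁻¹ ^ 2 * gaussianMoment 0 (T ^ 3) := by
        gcongr
        norm_num

theorem integral_exp_neg_decay_mul_one_sub_cos_le (hT : 50 ≤ T) :
    ∫ θ in -π..π, exp (-decay T⁻¹ θ) * (1 - cos (phase T⁻¹ θ)) ≤
      61 / 1000 * gaussianMoment 0 (T ^ 3) := by
  have hinv : T⁻¹ ≤ 50⁻¹ := inv_anti₀ (by norm_num) hT
  have hpos : 0 < T := by linarith
  have hphase := continuous_phase (inv_pos.mpr hpos)
  have hmoment := gaussianMoment_zero_pow_three_pos hpos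
  have htwo (θ : ℝ) : 1 - cos (phase T⁻¹ θ) ≤ 2 := by
    linarith [neg_one_le_cos (phase T⁻¹ θ)]
  have hsix (θ : ℝ) : 1 - cos (phase T⁻¹ θ) ≤ 81 / 50 * T ^ 8 * θ ^ (2 * 3) :=
    calc 1 - cos (phase T⁻¹ θ) ≤ |phase T⁻¹ θ| ^ 2 / 2 := by
          rw [sq_abs]
          linarith [one_sub_sq_div_two_le_cos (x := phase T⁻¹ θ)]
      _ ≤ (9 / 5 * T ^ 4 * |θ| ^ 3) ^ 2 / 2 := by
          gcongr
          exact abs_phase_le_mul_pow hpos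
      _ = 81 / 50 * T ^ 8 * |θ| ^ (2 * 3) := by ring
      _ = 81 / 50 * T ^ 8 * θ ^ (2 * 3) := by rw [(even_two_mul 3).pow_abs]
  calc ∫ θ in -π..π, exp (-decay T⁻¹ θ) * (1 - cos (phase T⁻¹ θ))
      ≤ _ :=
        integral_exp_neg_decay_mul_le (c₂ := 2) (l := 0) hT (by fun_prop)
          (fun θ => sub_nonneg.mpr (cos_le_one _)) hsix (by simpa using htwo) fun θ _ => htwo θ
    _ = (243 / 80 * T⁻¹ + 12 * T⁻¹ ^ 4 + 3 / 2 * T⁻¹ ^ 7) * gaussianMoment 0 (T ^ 3) := by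
        congr 1
        norm_num [Nat.doubleFactorial]
        field_simp
        ring
    _ ≤ (243 / 80 * 50⁻¹ + 12 * 50⁻¹ ^ 4 + 3 / 2 * 50⁻¹ ^ 7) * gaussianMoment 0 (T ^ 3) := by
        gcongr
    _ ≤ 61 / 1000 * gaussianMoment 0 (T ^ 3) := by
        gcongr
        norm_num

theorem le_gaussianMoment_zero_mul {b : ℝ} (hb : 0 ≤ b) :
    778 / 1000 * gaussianMoment 0 b ≤ gaussianMoment 0 (33 / 20 * b) := by
  have hroot : √(33 / 20) ≤ 1285 / 1000 := by
    rw [sqrt_le_left (by norm_num)]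
    norm_num
  have hinv : 778 / 1000 ≤ 1 / √(33 / 20) := by
    rw [le_div_iff₀ (by positivity)]
    linarith
  calc 778 / 1000 * gaussianMoment 0 b ≤ 1 / √(33 / 20) * gaussianMoment 0 b :=
        mul_le_mul_of_nonneg_right hinv (gaussianMoment_nonneg 0 hb)
    _ = gaussianMoment 0 (33 / 20 * b) := by
        simp only [gaussianMoment, pow_zero]
        rw [sqrt_mul (by norm_num)]
        ring

theorem le_integral_exp_neg_decay (hT : 50 ≤ T) :
    777 / 1000 * gaussianMoment 0 (T ^ 3) ≤ ∫ θ in -π..π, exp (-decay T⁻¹ θ) := by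
  have hpos : 0 < T := by linarith
  have hdecay := continuous_decay (inv_pos.mpr hpos)
  have hmoment := gaussianMoment_zero_pow_three_pos hpos
  have hscale := le_gaussianMoment_zero_mul (pow_nonneg hpos.le 3)
  have htail : 1 / π ^ 2 * (1 / 2 / (33 / 20 * T ^ 3)) ≤ 1 / 1000 :=
    calc 1 / π ^ 2 * (1 / 2 / (33 / 20 * T ^ 3))
        ≤ 1 / 3 ^ 2 * (1 / 2 / (33 / 20 * 50 ^ 3)) := by
          gcongr
          exact pi_gt_three.le
      _ ≤ 1 / 1000 := by norm_num
  have hone := gaussianMoment_eq_mul_gaussianMoment_zero 1 (33 / 20 * T ^ 3)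
  norm_num at hone
  calc 777 / 1000 * gaussianMoment 0 (T ^ 3)
      ≤ (1 - 1 / 1000) * (778 / 1000 * gaussianMoment 0 (T ^ 3)) := by
        nlinarith
    _ ≤ (1 - 1 / π ^ 2 * (1 / 2 / (33 / 20 * T ^ 3))) * gaussianMoment 0 (33 / 20 * T ^ 3) := by
        gcongr
        linarith
    _ = gaussianMoment 0 (33 / 20 * T ^ 3) - 1 / π ^ 2 * gaussianMoment 1 (33 / 20 * T ^ 3) := by
        rw [hone]
        ring
    _ ≤ ∫ θ in -π..π, exp (-(33 / 20 * T ^ 3) * θ ^ 2) :=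
        le_intervalIntegral_gaussian (by positivity) pi_pos
    _ ≤ ∫ θ in -π..π, exp (-decay T⁻¹ θ) := by
        refine intervalIntegral.integral_mono_on (by linarith [pi_pos])
          ((by fun_prop : Continuous _).intervalIntegrable _ _)
          ((by fun_prop : Continuous _).intervalIntegrable _ _) fun θ _ => ?_
        rw [neg_mul]
        gcongr
        exact decay_le_mul_sq hpos

theorem le_saddleIntegral_zero (hT : 50 ≤ T) :
    71 / 100 * gaussianMoment 0 (T ^ 3) ≤ saddleIntegral T⁻¹ 0 := by
  have hx : 0 < T⁻¹ := inv_pos.mpr (by linarith)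
  have hphase := continuous_phase hx
  have hmoment := gaussianMoment_zero_pow_three_pos (by linarith : 0 < T)
  have hsplit : saddleIntegral T⁻¹ 0 = (∫ θ in -π..π, exp (-decay T⁻¹ θ)) -
      ∫ θ in -π..π, exp (-decay T⁻¹ θ) * (1 - cos (phase T⁻¹ θ)) := by
    rw [saddleIntegral, ← intervalIntegral.integral_sub
      (by simpa using intervalIntegrable_exp_neg_decay_mul hx (continuous_const (y := 1)))
      (intervalIntegrable_exp_neg_decay_mul hx (by fun_prop))]
    congr 1 with θ
    rw [zero_mul, zero_add]
    ring
  rw [hsplit]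
  linarith [le_integral_exp_neg_decay hT, integral_exp_neg_decay_mul_one_sub_cos_le hT]

end SaddleIntegralBounds

section LogBounds

variable {u a b c : ℝ}

theorem two_mul_log_sub_log_sub_log_le {w : ℝ} (ha : 0 < a) (hb : 0 < b) (hc : 0 < c) (hw : w < 1)
    (h : (1 - w) * c ^ 2 ≤ a * b) : 2 * log c - log a - log b ≤ w / (1 - w) := by
  have hw' : 0 < 1 - w := by linarith
  have hlog := log_le_log (by positivity) h
  rw [log_mul hw'.ne' (by positivity), log_mul ha.ne' hb.ne', log_pow] at hlog
  have hinv := one_sub_inv_le_log_of_pos hw'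
  have heq : w / (1 - w) = (1 - w)⁻¹ - 1 := by
    field_simp
    ring
  push_cast at hlog
  linarith

theorem log_sub_log_le (ha : 0 < a) (hb : 0 < b) : log a - log b ≤ (a - b) / b := by
  rw [← log_div ha.ne' hb.ne', sub_div, div_self hb.ne']
  exact log_le_sub_one_of_pos (by positivity)

theorem le_of_add_ge_of_abs_sub_le (hu : 0 < u) (hu' : u ≤ 1 / 50) (hc : 0 < c)
    (hadd : (2 - 353 / 500 * u ^ 3) * c ≤ a + b) (hsub : |b - a| ≤ 953 / 250 * u ^ 2 * c) :
    999 / 1000 * c ≤ a := by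
  have hsq : u ^ 2 * c ≤ 1 / 2500 * c := by gcongr; nlinarith
  have hcube : u ^ 3 * c ≤ 1 / 125000 * c := by
    calc u ^ 3 * c ≤ (1 / 50) ^ 3 * c := by gcongr
      _ = 1 / 125000 * c := by norm_num
  linarith [le_abs_self (b - a)]

theorem two_mul_log_sub_log_sub_log_le_mul_pow (hu : 0 < u) (hu' : u ≤ 1 / 50) (hc : 0 < c)
    (hadd : (2 - 353 / 500 * u ^ 3) * c ≤ a + b) (hsub : |b - a| ≤ 953 / 250 * u ^ 2 * c) :
    2 * log c - log a - log b ≤ 39 / 50 * u ^ 3 := by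
  have ha := le_of_add_ge_of_abs_sub_le hu hu' hc hadd hsub
  have hb := le_of_add_ge_of_abs_sub_le hu hu' hc (a := b) (b := a) (by linarith)
    (by rwa [abs_sub_comm])
  have hcube : u ^ 3 ≤ (1 / 50) ^ 3 := by gcongr
  have hcube0 : 0 < u ^ 3 := by positivity
  have hfour : u ^ 4 ≤ 1 / 50 * u ^ 3 := by nlinarith
  have haddsq : ((2 - 353 / 500 * u ^ 3) * c) ^ 2 ≤ (a + b) ^ 2 := by
    have : 0 ≤ (2 - 353 / 500 * u ^ 3) * c := mul_nonneg (by linarith) hc.le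
    gcongr
  have hsubsq : (b - a) ^ 2 ≤ (953 / 250 * u ^ 2 * c) ^ 2 := by
    rw [← sq_abs]
    gcongr
  have hmul : (1 - 779 / 1000 * u ^ 3) * c ^ 2 ≤ a * b := by
    have hcoeff : 4 * (1 - 779 / 1000 * u ^ 3) ≤
        (2 - 353 / 500 * u ^ 3) ^ 2 - (953 / 250 * u ^ 2) ^ 2 := by
      linarith [sq_nonneg (u ^ 3)]
    have hmul := mul_le_mul_of_nonneg_right hcoeff (sq_nonneg c)
    linarith
  refine (two_mul_log_sub_log_sub_log_le (by linarith) (by linarith) hc (by linarith) hmul).trans ?_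
  rw [div_le_iff₀ (by linarith)]
  nlinarith

theorem log_sub_log_le_mul_sq (hu : 0 < u) (hu' : u ≤ 1 / 50) (hc : 0 < c)
    (hadd : (2 - 353 / 500 * u ^ 3) * c ≤ a + b) (hsub : |b - a| ≤ 953 / 250 * u ^ 2 * c) :
    log a - log b ≤ 191 / 50 * u ^ 2 := by
  have ha := le_of_add_ge_of_abs_sub_le hu hu' hc hadd hsub
  have hb := le_of_add_ge_of_abs_sub_le hu hu' hc (a := b) (b := a) (by linarith)
    (by rwa [abs_sub_comm])
  refine (log_sub_log_le (by linarith) (by linarith)).trans ?_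
  rw [div_le_iff₀ (by linarith)]
  calc a - b ≤ 953 / 250 * u ^ 2 * c := by linarith [neg_abs_le (b - a)]
    _ ≤ 191 / 50 * u ^ 2 * (999 / 1000 * c) := by linarith [mul_pos (pow_pos hu 2) hc]
    _ ≤ 191 / 50 * u ^ 2 * b := by gcongr

theorem log_le_linear {T : ℝ} (hT : 0 < T) : log T ≤ 23 / 1250 * T + 3 := by
  have hlog := log_le_sub_one_of_pos (mul_pos hT (exp_pos (-(4 : ℕ))))
  rw [log_mul hT.ne' (exp_pos _).ne', log_exp] at hlog
  have hexp : T * exp (-(4 : ℕ)) ≤ T * (23 / 1250) := by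
    gcongr
    exact (exp_neg_natCast_le 4).trans (by norm_num)
  push_cast at hlog hexp
  linarith

end LogBounds

section LargeArgument

variable {x T : ℝ} {n : ℕ}

theorem log_saddleIntegral (hx : 0 < x) (N : ℕ) :
    log (saddleIntegral x (N - moment 1 x)) =
      log (2 * π) + log (p N) - N * x - moment 0 x := by
  have hp := p_pos N
  rw [saddleIntegral_natCast_sub_moment_one hx, log_mul (by positivity) (by positivity),
    log_mul (x := 2 * π) (by positivity) (by positivity), log_mul hp.ne' (by positivity), log_exp,
    log_pow, log_exp]
  ring

theorem saddleIntegral_zero_pos (hT : 50 ≤ T) : 0 < saddleIntegral T⁻¹ 0 :=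
  (mul_pos (by norm_num) (gaussianMoment_zero_pow_three_pos (by linarith))).trans_le
    (le_saddleIntegral_zero hT)

theorem le_saddleIntegral_add (hT : 50 ≤ T) :
    (2 - 353 / 500 * T⁻¹ ^ 3) * saddleIntegral T⁻¹ 0 ≤
      saddleIntegral T⁻¹ 1 + saddleIntegral T⁻¹ (-1) := by
  have hx : 0 < T⁻¹ := inv_pos.mpr (by linarith)
  have hdefect := (two_mul_saddleIntegral_zero_sub_sub_le hx).trans
    (integral_exp_neg_decay_mul_sq_le hT)
  have hzero := mul_le_mul_of_nonneg_left (le_saddleIntegral_zero hT) (pow_pos hx 3).le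
  have hmoment := mul_pos (pow_pos hx 3) (gaussianMoment_zero_pow_three_pos (by linarith : 0 < T))
  linarith

theorem abs_saddleIntegral_sub_le (hT : 50 ≤ T) :
    |saddleIntegral T⁻¹ (-1) - saddleIntegral T⁻¹ 1| ≤
      953 / 250 * T⁻¹ ^ 2 * saddleIntegral T⁻¹ 0 := by
  have hx : 0 < T⁻¹ := inv_pos.mpr (by linarith)
  have hdiff := (abs_saddleIntegral_neg_one_sub_le hx).trans
    (mul_le_mul_of_nonneg_left (integral_exp_neg_decay_mul_abs_sin_mul_sin_le hT) zero_le_two)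
  have hzero := mul_le_mul_of_nonneg_left (le_saddleIntegral_zero hT) (pow_pos hx 2).le
  have hmoment := mul_pos (pow_pos hx 2) (gaussianMoment_zero_pow_three_pos (by linarith : 0 < T))
  linarith

theorem le_log_saddleIntegral_zero (hT : 50 ≤ T) :
    -2 - 3 / 2 * log T ≤ log (saddleIntegral T⁻¹ 0) - log (2 * π) := by
  have hpos : 0 < T := by linarith
  have hzero := saddleIntegral_zero_pos hT
  have hexp : exp (-2) ≤ 71 / 400 := by
    have h := (exp_neg_natCast_le 2).trans (by norm_num : _ ≤ (71 / 400 : ℝ))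
    exact_mod_cast h
  have hle : exp (-2) * (2 * π) ≤ T * √T * saddleIntegral T⁻¹ 0 := by
    calc exp (-2) * (2 * π) = exp (-2) * (2 * (√π * √π)) := by rw [mul_self_sqrt pi_pos.le]
      _ ≤ 71 / 400 * (2 * (2 * √π)) := by
          gcongr
          exact sqrt_pi_le_two
      _ = T * √T * (71 / 100 * gaussianMoment 0 (T ^ 3)) := by
          rw [gaussianMoment_zero_pow_three hpos.le]
          field_simp
          norm_num
      _ ≤ T * √T * saddleIntegral T⁻¹ 0 := by
          gcongr
          exact le_saddleIntegral_zero hT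
  have hlog := log_le_log (by positivity) hle
  rw [log_mul (exp_pos _).ne' (by positivity), log_mul (by positivity) hzero.ne',
    log_mul (x := T) (by positivity) (by positivity), log_exp, log_sqrt hpos.le] at hlog
  linarith

theorem natCast_mul_inv_sq_le (hT : 0 < T) (hm : moment 1 T⁻¹ = n) : n * T⁻¹ ^ 2 ≤ 329 / 200 := by
  have hmoment := moment_one_le (inv_pos.mpr hT)
  rw [hm] at hmoment
  calc n * T⁻¹ ^ 2 ≤ 1 / T⁻¹ ^ 2 * (π ^ 2 / 6) * T⁻¹ ^ 2 := by gcongr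
    _ = π ^ 2 / 6 := by field_simp
    _ ≤ 329 / 200 := pi_sq_div_six_le

theorem natCast_sq_mul_log_sub_le (hT : 50 ≤ T) (hm : moment 1 T⁻¹ = n) :
    n ^ 2 * (2 * log (saddleIntegral T⁻¹ 0) - log (saddleIntegral T⁻¹ 1) -
      log (saddleIntegral T⁻¹ (-1))) ≤ 53 / 25 * T := by
  have hpos : 0 < T := by linarith
  have hx : T⁻¹ ≤ 1 / 50 := by simpa using inv_anti₀ (by norm_num) hT
  have hn := natCast_mul_inv_sq_le hpos hm
  calc n ^ 2 * (2 * log (saddleIntegral T⁻¹ 0) - log (saddleIntegral T⁻¹ 1) -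
        log (saddleIntegral T⁻¹ (-1)))
      ≤ n ^ 2 * (39 / 50 * T⁻¹ ^ 3) := by
        gcongr
        exact two_mul_log_sub_log_sub_log_le_mul_pow (inv_pos.mpr hpos) hx
          (saddleIntegral_zero_pos hT) (le_saddleIntegral_add hT) (abs_saddleIntegral_sub_le hT)
    _ = 39 / 50 * (n * T⁻¹ ^ 2) ^ 2 * T := by field_simp
    _ ≤ 39 / 50 * (329 / 200) ^ 2 * T := by gcongr
    _ ≤ 53 / 25 * T := by
        gcongr
        norm_num

theorem natCast_mul_log_sub_le (hT : 50 ≤ T) (hm : moment 1 T⁻¹ = n) :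
    n * (log (saddleIntegral T⁻¹ 1) - log (saddleIntegral T⁻¹ (-1))) ≤ 63 / 10 := by
  have hpos : 0 < T := by linarith
  have hx : T⁻¹ ≤ 1 / 50 := by simpa using inv_anti₀ (by norm_num) hT
  have hlog := log_sub_log_le_mul_sq (inv_pos.mpr hpos) hx (saddleIntegral_zero_pos hT)
    (le_saddleIntegral_add hT) (abs_saddleIntegral_sub_le hT)
  have hmul := mul_le_mul_of_nonneg_left hlog (Nat.cast_nonneg n)
  linarith [natCast_mul_inv_sq_le hpos hm]

theorem rootLogConvexAt_of_moment_eq (hn : 1 ≤ n) (hT : 50 ≤ T) (hm : moment 1 T⁻¹ = n) :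
    RootLogConvexAt p n := by
  have hpos : 0 < T := by linarith
  have hlog := log_saddleIntegral (inv_pos.mpr hpos)
  have hzero := hlog n
  have hsucc := hlog (n + 1)
  have hpred := hlog (n - 1)
  push_cast [hn] at hsucc hpred
  rw [hm] at hzero hsucc hpred
  rw [sub_self] at hzero
  rw [add_sub_cancel_left] at hsucc
  rw [sub_sub_cancel_left] at hpred
  have hsecond := natCast_sq_mul_log_sub_le hT hm
  have hfirst := natCast_mul_log_sub_le hT hm
  have hmoment := le_moment_zero (inv_pos.mpr hpos)
  rw [one_div, inv_inv] at hmoment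
  rw [RootLogConvexAt]
  calc _ = n ^ 2 * (2 * log (saddleIntegral T⁻¹ 0) - log (saddleIntegral T⁻¹ 1) -
          log (saddleIntegral T⁻¹ (-1))) +
        n * (log (saddleIntegral T⁻¹ 1) - log (saddleIntegral T⁻¹ (-1))) + 2 * (n * T⁻¹) := by
        rw [hzero, hsucc, hpred]
        ring
    _ ≤ 53 / 25 * T + 63 / 10 + 2 * (n * T⁻¹) := by gcongr
    _ ≤ 2 * (-2 - 3 / 2 * log T + n * T⁻¹ + (205 / 144 * T - 25 / 24)) := by
        linarith [log_le_linear hpos]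
    _ ≤ 2 * (log (saddleIntegral T⁻¹ 0) - log (2 * π) + n * T⁻¹ + moment 0 T⁻¹) := by
        linarith [le_log_saddleIntegral_zero hT]
    _ = _ := by
        rw [hzero]
        ring

theorem rootLogConvexAt_of_lt (hn : 4122 < n) : RootLogConvexAt p n := by
  have hn' : (4123 : ℝ) ≤ n := by exact_mod_cast hn
  obtain ⟨x, hx, hm⟩ := exists_moment_one_eq (N := n) (by linarith)
  have hm' : moment 1 x⁻¹⁻¹ = n := by rwa [inv_inv]
  refine rootLogConvexAt_of_moment_eq (by lia) ?_ hm'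
  have hle := natCast_mul_inv_sq_le (inv_pos.mpr hx) hm'
  rw [inv_inv] at hle
  rw [le_inv_comm₀ (by norm_num) hx]
  nlinarith

end LargeArgument

end PartitionRoot

theorem nth_root_p_log_convex (n : ℕ) (hn : 27 ≤ n) :
    (p n ^ ((1 : ℝ) / (n : ℝ))) ^ 2 ≤
      p (n - 1) ^ ((1 : ℝ) / ((n : ℝ) - 1)) * p (n + 1) ^ ((1 : ℝ) / ((n : ℝ) + 1)) := by
  have hlog : PartitionRoot.RootLogConvexAt p n := by
    rcases le_or_gt n 4122 with hsmall | hlarge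
    · exact PartitionRoot.rootLogConvexAt_of_le hn hsmall
    · exact PartitionRoot.rootLogConvexAt_of_lt hlarge
  exact hlog.rpow_sq_le PartitionRoot.p_pos (by lia)
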